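/- arXiv:2201.00847 — 3 statements merged into one kernel-verified Lean document; each statement's English description precedes it below -/
import Mathlib

section
/- Let M be a finite R-module of finite G_C-dimension. Then grade_R(Ext_R^i(M,C)) ≥ i for every i > 0. -/
open CategoryTheory TensorProduct

noncomputable section

universe u

variable (R : Type u) [CommRing R]

/-- The `i`-th Ext module `Ext_R^i(M, N)`. -/
def ExtM (M N : ModuleCat.{u} R) (i : ℕ) : ModuleCat.{u} R :=
  ((Ext R (ModuleCat.{u} R) i).obj (Opposite.op M)).obj N

/-- The `i`-th Tor module `Tor_i^R(M, N)`. -/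
def TorM (M N : ModuleCat.{u} R) (i : ℕ) : ModuleCat.{u} R :=
  ((Tor (ModuleCat.{u} R) i).obj M).obj N

/-- The biduality (evaluation) map `M → Hom_R(Hom_R(M, C), C)`. -/
def bidualityMap (C M : ModuleCat.{u} R) :
    ↥M →ₗ[R] ((↥M →ₗ[R] ↥C) →ₗ[R] ↥C) :=
  (LinearMap.id : (↥M →ₗ[R] ↥C) →ₗ[R] (↥M →ₗ[R] ↥C)).flip

/-- `C` is a semidualizing `R`-module. -/
def IsSemidualizing (C : ModuleCat.{u} R) : Prop :=
  Module.Finite R ↥C ∧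
  Function.Bijective (fun r : R => (r • LinearMap.id : ↥C →ₗ[R] ↥C)) ∧
  ∀ i : ℕ, 0 < i → Subsingleton (ExtM R C C i)

/-- `M` is totally `C`-reflexive. -/
def IsTotallyCReflexive (C M : ModuleCat.{u} R) : Prop :=
  Module.Finite R ↥M ∧
  Function.Bijective (bidualityMap R C M) ∧
  (∀ i : ℕ, 0 < i → Subsingleton (ExtM R M C i)) ∧
  (∀ i : ℕ, 0 < i → Subsingleton (ExtM R (ModuleCat.of R (↥M →ₗ[R] ↥C)) C i))

/-- `G_C`-dimension of `M` is at most `n`: there is an exact sequence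
`0 → X_n → ⋯ → X_0 → M → 0` with each `X_i` totally `C`-reflexive. -/
def gcdimLE (C : ModuleCat.{u} R) : ℕ → ModuleCat.{u} R → Prop
  | 0, M => IsTotallyCReflexive R C M
  | n+1, M => ∃ (X K : ModuleCat.{u} R) (f : ↥K →ₗ[R] ↥X) (g : ↥X →ₗ[R] ↥M),
      Function.Injective f ∧ Function.Surjective g ∧
      LinearMap.ker g = LinearMap.range f ∧
      IsTotallyCReflexive R C X ∧ gcdimLE C n K

/-- The `G_C`-dimension of `M`, as an element of `ℕ∞`. -/
def gcdim (C M : ModuleCat.{u} R) : ℕ∞ :=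
  sInf ((fun n : ℕ => (n : ℕ∞)) '' {n | gcdimLE R C n M})

/-- `grade_R(M) = inf { i | Ext_R^i(M, R) ≠ 0 }`, with `grade 0 = ∞`. -/
def gradeR (M : ModuleCat.{u} R) : ℕ∞ :=
  sInf ((fun i : ℕ => (i : ℕ∞)) ''
    {i | ¬ Subsingleton (ExtM R M (ModuleCat.of R R) i)})

/-- Reduced grade of `M` with respect to `C`. -/
def rgrade (C M : ModuleCat.{u} R) : ℕ∞ :=
  sInf ((fun i : ℕ => (i : ℕ∞)) ''
    {i | 0 < i ∧ ¬ Subsingleton (ExtM R M C i)})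

/-- `M` is reduced `G_C`-perfect. -/
def IsReducedGCPerfect (C M : ModuleCat.{u} R) : Prop :=
  gcdim R C M ≠ ⊤ ∧ rgrade R C M = gcdim R C M

/-- `M` is `G_C`-perfect. -/
def IsGCPerfect (C M : ModuleCat.{u} R) : Prop :=
  gcdim R C M ≠ ⊤ ∧ gradeR R M = gcdim R C M

/-- `π : P → M` is a projective cover: `P` projective, `π` surjective with superfluous kernel. -/
def IsProjectiveCover {P M : ModuleCat.{u} R} (π : ↥P →ₗ[R] ↥M) : Prop :=
  Module.Projective R ↥P ∧ Function.Surjective π ∧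
  ∀ N : Submodule R ↥P, N ⊔ LinearMap.ker π = ⊤ → N = ⊤

/-- `P₁ →d P₀ →π M → 0` is a minimal projective presentation of `M`. -/
def IsMinimalPresentation {P1 P0 M : ModuleCat.{u} R}
    (d : ↥P1 →ₗ[R] ↥P0) (π : ↥P0 →ₗ[R] ↥M) : Prop :=
  Module.Finite R ↥P1 ∧ Module.Finite R ↥P0 ∧
  IsProjectiveCover R π ∧
  LinearMap.range d = LinearMap.ker π ∧
  Module.Projective R ↥P1 ∧
  ∀ N : Submodule R ↥P1, N ⊔ LinearMap.ker d = ⊤ → N = ⊤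

/-- `T` is (a module isomorphic to) the transpose `Tr_C(M)` of `M` with respect to `C`,
computed from a minimal projective presentation of `M`. -/
def IsTransposeC (C M T : ModuleCat.{u} R) : Prop :=
  ∃ (P1 P0 : ModuleCat.{u} R) (d : ↥P1 →ₗ[R] ↥P0) (π : ↥P0 →ₗ[R] ↥M),
    IsMinimalPresentation R d π ∧
    Nonempty (↥T ≃ₗ[R]
      ((↥P1 →ₗ[R] ↥C) ⧸ LinearMap.range (LinearMap.lcomp R ↥C d)))

/-- `T` is the usual Auslander transpose `Tr(M) = Tr_R(M)`. -/
def IsTranspose (M T : ModuleCat.{u} R) : Prop :=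
  IsTransposeC R (ModuleCat.of R R) M T

/-- `S` is (a module isomorphic to) the first syzygy `Ω N`, i.e. the kernel of a
projective cover of `N`. -/
def IsSyzygyOf (N S : ModuleCat.{u} R) : Prop :=
  ∃ (P : ModuleCat.{u} R) (π : ↥P →ₗ[R] ↥N),
    Module.Finite R ↥P ∧ IsProjectiveCover R π ∧
    Nonempty (↥S ≃ₗ[R] LinearMap.ker π)

/-- `S` is (a module isomorphic to) the `n`-th syzygy `Ωⁿ M`. -/
def IsNthSyzygy : ℕ → ModuleCat.{u} R → ModuleCat.{u} R → Prop
  | 0, M, S => Nonempty (↥S ≃ₗ[R] ↥M)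
  | n+1, M, S => ∃ K : ModuleCat.{u} R, IsNthSyzygy n M K ∧ IsSyzygyOf R K S

/-- `L` is (a module isomorphic to) `λ M = Ω Tr M`. -/
def IsLambda (M L : ModuleCat.{u} R) : Prop :=
  ∃ T : ModuleCat.{u} R, IsTranspose R M T ∧ IsSyzygyOf R T L

/-- `M` is horizontally linked, i.e. `M ≅ λλM`. -/
def IsHorizontallyLinked (M : ModuleCat.{u} R) : Prop :=
  ∃ L L2 : ModuleCat.{u} R, IsLambda R M L ∧ IsLambda R L L2 ∧
    Nonempty (↥M ≃ₗ[R] ↥L2)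

/-- `M` is stable: it has no non-zero projective direct summand. -/
def IsStable (M : ModuleCat.{u} R) : Prop :=
  ∀ (P N : ModuleCat.{u} R), Module.Projective R ↥P →
    Nonempty (↥M ≃ₗ[R] (↥P × ↥N)) → Subsingleton ↥P

/-- `N` belongs to the Auslander class `A_C`. -/
def MemAuslanderClass (C N : ModuleCat.{u} R) : Prop :=
  Function.Bijective (TensorProduct.mk R ↥N ↥C) ∧
  (∀ i : ℕ, 0 < i → Subsingleton (TorM R C N i)) ∧
  (∀ i : ℕ, 0 < i → Subsingleton
    (ExtM R C (ModuleCat.of R (↥N ⊗[R] ↥C)) i))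

/-- `R` is semiperfect: every finite `R`-module has a projective cover. -/
def IsSemiperfectRing : Prop :=
  ∀ M : ModuleCat.{u} R, Module.Finite R ↥M →
    ∃ (P : ModuleCat.{u} R) (π : ↥P →ₗ[R] ↥M),
      Module.Finite R ↥P ∧ IsProjectiveCover R π

/-- Depth over a local ring, via Ext from the residue field. -/
def rdepth [IsLocalRing R] (M : ModuleCat.{u} R) : ℕ∞ :=
  sInf ((fun i : ℕ => (i : ℕ∞)) ''
    {i | ¬ Subsingleton
      (ExtM R (ModuleCat.of R (IsLocalRing.ResidueField R)) M i)})

/-- Projective dimension at most `n`. -/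
def pdimLE : ℕ → ModuleCat.{u} R → Prop
  | 0, M => Module.Projective R ↥M
  | n+1, M => ∃ (X K : ModuleCat.{u} R) (f : ↥K →ₗ[R] ↥X) (g : ↥X →ₗ[R] ↥M),
      Function.Injective f ∧ Function.Surjective g ∧
      LinearMap.ker g = LinearMap.range f ∧
      Module.Projective R ↥X ∧ pdimLE n K

/-- Projective dimension, as an element of `ℕ∞`. -/
def pdim (M : ModuleCat.{u} R) : ℕ∞ :=
  sInf ((fun n : ℕ => (n : ℕ∞)) '' {n | pdimLE R n M})

/-- `M` is `C`-`k`-torsionless. -/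
def IsCkTorsionless (C M : ModuleCat.{u} R) (k : ℕ) : Prop :=
  k = 0 ∨ ∀ T : ModuleCat.{u} R, IsTransposeC R C M T →
    ∀ i : ℕ, 1 ≤ i → i ≤ k → Subsingleton (ExtM R T C i)

/-- `M` is a `C`-syzygy: it embeds into `P ⊗_R C` with `P` finite projective. -/
def IsCSyzygy (C M : ModuleCat.{u} R) : Prop :=
  ∃ (P : ModuleCat.{u} R), Module.Finite R ↥P ∧ Module.Projective R ↥P ∧
    ∃ f : ↥M →ₗ[R] (↥P ⊗[R] ↥C), Function.Injective f


/-- There is an exact sequence `0 → N → X_k → ⋯ → X_1 → M → 0` of finite `R`-modules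
with `Ext_R^i(X_j, C) = 0` for all `i > 0` and all `j`. -/
def ExtVanishingChain (C : ModuleCat.{u} R) : ℕ → ModuleCat.{u} R → ModuleCat.{u} R → Prop
  | 0, N, M => Nonempty (↥N ≃ₗ[R] ↥M)
  | k+1, N, M => ∃ (X K : ModuleCat.{u} R) (f : ↥K →ₗ[R] ↥X) (g : ↥X →ₗ[R] ↥M),
      Function.Injective f ∧ Function.Surjective g ∧
      LinearMap.ker g = LinearMap.range f ∧
      Module.Finite R ↥X ∧ (∀ i : ℕ, 0 < i → Subsingleton (ExtM R X C i)) ∧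
      ExtVanishingChain C k N K


section Compare

variable {R}

lemma s8_smul_extMk {M N : ModuleCat.{u} R} (P : ProjectiveResolution M) {n m : ℕ} (hm : n + 1 = m)
    (r : R) (f : P.complex.X n ⟶ N) (hf : P.complex.d m n ≫ f = 0) :
    P.extMk (r • f) m hm (by simp [hf]) = r • P.extMk f m hm hf := by
  rw [Abelian.Ext.smul_eq_comp_mk₀, ProjectiveResolution.extMk_comp_mk₀]
  simp

lemma s8_extM_equiv (M N : ModuleCat.{u} R) (n : ℕ) :
    Nonempty (ExtM R M N (n + 1) ≃ₗ[R] Abelian.Ext M N (n + 1)) := by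
  obtain ⟨P⟩ : Nonempty (ProjectiveResolution M) := HasProjectiveResolution.out
  let K := P.complex.linearYonedaObj R N
  let e1 : ExtM R M N (n + 1) ≅ K.homology (n + 1) := P.isoExt (n + 1) N
  let S := K.sc' n (n + 1) (n + 2)
  let e2 : K.homology (n + 1) ≅ S.homology :=
    ShortComplex.homologyMapIso (K.isoSc' n (n + 1) (n + 2) (by simp) (by simp))
  let e3 : S.homology ≅ S.moduleCatLeftHomologyData.H := S.moduleCatHomologyIso
  let φ : LinearMap.ker S.g.hom →ₗ[R] Abelian.Ext M N (n + 1) :=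
    { toFun := fun f => P.extMk (n := n + 1) (f.1 : P.complex.X (n + 1) ⟶ N) (n + 2) rfl (by
        have := f.2
        rw [LinearMap.mem_ker] at this
        exact this)
      map_add' := fun f g => (P.add_extMk (n := n + 1) (f.1 : P.complex.X (n + 1) ⟶ N)
        (g.1 : P.complex.X (n + 1) ⟶ N) (n + 2) rfl f.2 g.2).symm
      map_smul' := fun r f => s8_smul_extMk P rfl r (f.1 : P.complex.X (n + 1) ⟶ N) f.2 }
  have hφs : Function.Surjective φ := by
    intro x
    obtain ⟨f, hf, rfl⟩ := P.extMk_surjective x (n + 2) rfl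
    exact ⟨⟨f, hf⟩, rfl⟩
  have hφk : LinearMap.ker φ = LinearMap.range S.moduleCatToCycles := by
    ext f
    have h := P.extMk_eq_zero_iff (f.1 : P.complex.X (n + 1) ⟶ N) (n + 2) rfl f.2 n rfl
    rw [LinearMap.mem_ker]
    refine Iff.trans h ?_
    constructor
    · rintro ⟨g, hg⟩
      exact ⟨g, Subtype.ext hg⟩
    · rintro ⟨g, hg⟩
      exact ⟨g, congrArg Subtype.val hg⟩
  let e4 : (LinearMap.ker S.g.hom ⧸ LinearMap.range S.moduleCatToCycles) ≃ₗ[R]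
      Abelian.Ext M N (n + 1) :=
    (Submodule.quotEquivOfEq _ _ hφk.symm).trans (φ.quotKerEquivOfSurjective hφs)
  exact ⟨(e1 ≪≫ e2 ≪≫ e3).toLinearEquiv.trans e4⟩

lemma s8_extM_zero (M N : ModuleCat.{u} R) (h : ∀ f : M ⟶ N, f = 0) :
    Subsingleton (ExtM R M N 0) := by
  obtain ⟨P⟩ : Nonempty (ProjectiveResolution M) := HasProjectiveResolution.out
  let K := P.complex.linearYonedaObj R N
  let e1 : ExtM R M N 0 ≅ K.homology 0 := P.isoExt 0 N
  let S := K.sc' 0 0 1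
  let e2 : K.homology 0 ≅ S.homology :=
    ShortComplex.homologyMapIso (K.isoSc' 0 0 1 (by simp) (by simp))
  let e3 : S.homology ≅ S.moduleCatLeftHomologyData.H := S.moduleCatHomologyIso
  have h0 : Subsingleton (LinearMap.ker S.g.hom) := by
    refine subsingleton_of_forall_eq 0 fun f => Subtype.ext ?_
    have hf : P.complex.d 1 0 ≫ (f.1 : P.complex.X 0 ⟶ N) = 0 := f.2
    have hd := P.exact₀.g_desc (f.1 : P.complex.X 0 ⟶ N) hf
    have hq : P.exact₀.desc (f.1 : P.complex.X 0 ⟶ N) hf = 0 := h _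
    exact hd.symm.trans ((congrArg _ hq).trans Limits.comp_zero)
  have h1 : Subsingleton (LinearMap.ker S.g.hom ⧸ LinearMap.range S.moduleCatToCycles) := 
    inferInstance
  exact (e1 ≪≫ e2 ≪≫ e3).toLinearEquiv.toEquiv.subsingleton_congr.2 h1

end Compare
section ExtTools

variable {R}

/-- Every element of `Ext^j(A, B)` is killed by an element of `S`. -/
def NExt (S : Submonoid R) (A B : Type u) [AddCommGroup A] [Module R A] [AddCommGroup B]
    [Module R B] (j : ℕ) : Prop :=
  ∀ e : Abelian.Ext (ModuleCat.of R A) (ModuleCat.of R B) j, ∃ s ∈ S, s • e = 0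

variable {S : Submonoid R} {A B D Y : Type u} [AddCommGroup A] [Module R A] [AddCommGroup B]
    [Module R B] [AddCommGroup D] [Module R D] [AddCommGroup Y] [Module R Y]

/-- A short exact sequence `0 → A → B → D → 0`. -/
structure SES (f : A →ₗ[R] B) (g : B →ₗ[R] D) : Prop where
  inj : Function.Injective f
  surj : Function.Surjective g
  exact : Function.Exact f g

/-- The associated short complex. -/
abbrev SES.cx {f : A →ₗ[R] B} {g : B →ₗ[R] D} (h : SES f g) : ShortComplex (ModuleCat.{u} R) :=
  ShortComplex.mk (ModuleCat.ofHom f) (ModuleCat.ofHom g)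
    (by ext x; exact h.exact.apply_apply_eq_zero x)

lemma SES.se {f : A →ₗ[R] B} {g : B →ₗ[R] D} (h : SES f g) : h.cx.ShortExact :=
  ModuleCat.shortComplex_shortExact _ h.exact h.inj h.surj

lemma NExt.mono {S' : Submonoid R} (hS : S ≤ S') {j : ℕ} (h : NExt S A B j) : NExt S' A B j :=
  fun e => let ⟨s, hs, h⟩ := h e; ⟨s, hS hs, h⟩

lemma nExt_of_subsingleton {j : ℕ}
    (h : Subsingleton (Abelian.Ext (ModuleCat.of R A) (ModuleCat.of R B) j)) : NExt S A B j :=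
  fun e => ⟨1, S.one_mem, Subsingleton.elim _ _⟩

lemma NExt.subsingleton {j : ℕ} (h : NExt (⊥ : Submonoid R) A B j) :
    Subsingleton (Abelian.Ext (ModuleCat.of R A) (ModuleCat.of R B) j) :=
  subsingleton_of_forall_eq 0 fun e => by
    obtain ⟨s, hs, h⟩ := h e
    rw [Submonoid.mem_bot] at hs
    rwa [hs, one_smul] at h

variable {f : A →ₗ[R] B} {g : B →ₗ[R] D}

lemma SES.contra2 (h : SES f g) {j : ℕ} (hA : NExt S A Y j) (hD : NExt S D Y j) :
    NExt S B Y j := by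
  intro e
  obtain ⟨s, hs, h1⟩ := hA ((Abelian.Ext.mk₀ h.cx.f).comp e (zero_add j))
  rw [← Abelian.Ext.comp_smul] at h1
  obtain ⟨x, hx⟩ := Abelian.Ext.contravariant_sequence_exact₂ h.se _ _ h1
  obtain ⟨s', hs', h2⟩ := hD x
  refine ⟨s' * s, S.mul_mem hs' hs, ?_⟩
  rw [mul_smul, ← hx, ← Abelian.Ext.comp_smul, h2, Abelian.Ext.comp_zero]

lemma SES.contra1 (h : SES f g) {j : ℕ} (hB : NExt S B Y j) (hD : NExt S D Y (j + 1)) :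
    NExt S A Y j := by
  intro e
  obtain ⟨s, hs, h1⟩ := hD (h.se.extClass.comp e (add_comm 1 j))
  rw [← Abelian.Ext.comp_smul] at h1
  obtain ⟨x, hx⟩ := Abelian.Ext.contravariant_sequence_exact₁ h.se _ _ _ h1
  obtain ⟨s', hs', h2⟩ := hB x
  refine ⟨s' * s, S.mul_mem hs' hs, ?_⟩
  rw [mul_smul, ← hx, ← Abelian.Ext.comp_smul, h2, Abelian.Ext.comp_zero]

lemma SES.contra3 (h : SES f g) {j : ℕ} (hA : NExt S A Y j) (hB : NExt S B Y (j + 1)) :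
    NExt S D Y (j + 1) := by
  intro e
  obtain ⟨s, hs, h1⟩ := hB ((Abelian.Ext.mk₀ h.cx.g).comp e (zero_add _))
  rw [← Abelian.Ext.comp_smul] at h1
  obtain ⟨x, hx⟩ := Abelian.Ext.contravariant_sequence_exact₃ h.se _ _ h1 (add_comm 1 j)
  obtain ⟨s', hs', h2⟩ := hA x
  refine ⟨s' * s, S.mul_mem hs' hs, ?_⟩
  rw [mul_smul, ← hx, ← Abelian.Ext.comp_smul, h2, Abelian.Ext.comp_zero]

lemma SES.co2 (h : SES f g) {j : ℕ} (hA : NExt S Y A j) (hD : NExt S Y D j) :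
    NExt S Y B j := by
  intro e
  obtain ⟨s, hs, h1⟩ := hD (e.comp (Abelian.Ext.mk₀ h.cx.g) (add_zero j))
  rw [← Abelian.Ext.smul_comp] at h1
  obtain ⟨x, hx⟩ := Abelian.Ext.covariant_sequence_exact₂ _ h.se _ h1
  obtain ⟨s', hs', h2⟩ := hA x
  refine ⟨s' * s, S.mul_mem hs' hs, ?_⟩
  rw [mul_smul, ← hx, ← Abelian.Ext.smul_comp, h2, Abelian.Ext.zero_comp]

lemma SES.co3 (h : SES f g) {j : ℕ} (hB : NExt S Y B j) (hA : NExt S Y A (j + 1)) :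
    NExt S Y D j := by
  intro e
  obtain ⟨s, hs, h1⟩ := hA (e.comp h.se.extClass rfl)
  rw [← Abelian.Ext.smul_comp] at h1
  obtain ⟨x, hx⟩ := Abelian.Ext.covariant_sequence_exact₃ _ h.se _ _ h1
  obtain ⟨s', hs', h2⟩ := hB x
  refine ⟨s' * s, S.mul_mem hs' hs, ?_⟩
  rw [mul_smul, ← hx, ← Abelian.Ext.smul_comp, h2, Abelian.Ext.zero_comp]

lemma SES.co1 (h : SES f g) {j : ℕ} (hD : NExt S Y D j) (hB : NExt S Y B (j + 1)) :
    NExt S Y A (j + 1) := by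
  intro e
  obtain ⟨s, hs, h1⟩ := hB (e.comp (Abelian.Ext.mk₀ h.cx.f) (add_zero _))
  rw [← Abelian.Ext.smul_comp] at h1
  obtain ⟨x, hx⟩ := Abelian.Ext.covariant_sequence_exact₁ _ h.se _ h1 rfl
  obtain ⟨s', hs', h2⟩ := hD x
  refine ⟨s' * s, S.mul_mem hs' hs, ?_⟩
  rw [mul_smul, ← hx, ← Abelian.Ext.smul_comp, h2, Abelian.Ext.zero_comp]

/-- Degree zero is `Hom`. -/
lemma nExt_zero_iff : NExt S A B 0 ↔ ∀ φ : A →ₗ[R] B, ∃ s ∈ S, s • φ = 0 := by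
  let e : Abelian.Ext (ModuleCat.of R A) (ModuleCat.of R B) 0 ≃ₗ[R] (A →ₗ[R] B) :=
    Abelian.Ext.linearEquiv₀.trans ModuleCat.homLinearEquiv
  constructor
  · intro h φ
    obtain ⟨s, hs, h1⟩ := h (e.symm φ)
    refine ⟨s, hs, ?_⟩
    rwa [← map_smul, LinearEquiv.map_eq_zero_iff] at h1
  · intro h x
    obtain ⟨s, hs, h1⟩ := h (e x)
    refine ⟨s, hs, ?_⟩
    rwa [← map_smul, LinearEquiv.map_eq_zero_iff] at h1

/-- Extending homomorphisms along `A → B` up to `S`. -/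
lemma SES.extend (h : SES f g) (hD : NExt S D Y 1) (φ : A →ₗ[R] Y) :
    ∃ s ∈ S, ∃ ψ : B →ₗ[R] Y, ψ ∘ₗ f = s • φ := by
  obtain ⟨s, hs, h1⟩ := hD (h.se.extClass.comp (Abelian.Ext.mk₀ (ModuleCat.ofHom φ)) (add_zero 1))
  rw [← Abelian.Ext.comp_smul, ← Abelian.Ext.mk₀_smul] at h1
  obtain ⟨x, hx⟩ := Abelian.Ext.contravariant_sequence_exact₁ h.se _ _ _ h1
  obtain ⟨ψ, rfl⟩ := (Abelian.Ext.linearEquiv₀ (R := R)).symm.surjective x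
  refine ⟨s, hs, ψ.hom, ?_⟩
  change (Abelian.Ext.mk₀ h.cx.f).comp (Abelian.Ext.mk₀ ψ) _ = _ at hx
  rw [Abelian.Ext.mk₀_comp_mk₀] at hx
  have := (Abelian.Ext.linearEquiv₀ (R := R)).symm.injective hx
  exact congrArg ModuleCat.Hom.hom this

lemma SES.of_extend (h : SES f g)
    (hφ : ∀ φ : A →ₗ[R] Y, ∃ s ∈ S, ∃ ψ : B →ₗ[R] Y, ψ ∘ₗ f = s • φ)
    (hB : NExt S B Y 1) : NExt S D Y 1 := by
  intro e
  obtain ⟨s, hs, h1⟩ := hB ((Abelian.Ext.mk₀ h.cx.g).comp e (zero_add _))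
  rw [← Abelian.Ext.comp_smul] at h1
  obtain ⟨x, hx⟩ := Abelian.Ext.contravariant_sequence_exact₃ h.se _ _ h1 (add_zero 1)
  obtain ⟨φ, rfl⟩ := (Abelian.Ext.linearEquiv₀ (R := R)).symm.surjective x
  obtain ⟨s', hs', ψ, hψ⟩ := hφ φ.hom
  refine ⟨s' * s, S.mul_mem hs' hs, ?_⟩
  have h2 : s' • φ = h.cx.f ≫ ModuleCat.ofHom ψ := by
    ext1
    exact hψ.symm
  change h.se.extClass.comp (Abelian.Ext.mk₀ φ) _ = _ at hx
  rw [mul_smul, ← hx, ← Abelian.Ext.comp_smul, ← Abelian.Ext.mk₀_smul, h2,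
    ← Abelian.Ext.mk₀_comp_mk₀, ← Abelian.Ext.comp_assoc_of_second_deg_zero,
    h.se.extClass_comp, Abelian.Ext.zero_comp]

lemma SES.lift (h : SES f g) (hA : NExt S Y A 1) (φ : Y →ₗ[R] D) :
    ∃ s ∈ S, ∃ ψ : Y →ₗ[R] B, g ∘ₗ ψ = s • φ := by
  obtain ⟨s, hs, h1⟩ := hA ((Abelian.Ext.mk₀ (ModuleCat.ofHom φ)).comp h.se.extClass (zero_add 1))
  rw [← Abelian.Ext.smul_comp, ← Abelian.Ext.mk₀_smul] at h1
  obtain ⟨x, hx⟩ := Abelian.Ext.covariant_sequence_exact₃ _ h.se _ _ h1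
  obtain ⟨ψ, rfl⟩ := (Abelian.Ext.linearEquiv₀ (R := R)).symm.surjective x
  refine ⟨s, hs, ψ.hom, ?_⟩
  change (Abelian.Ext.mk₀ ψ).comp (Abelian.Ext.mk₀ h.cx.g) _ = _ at hx
  rw [Abelian.Ext.mk₀_comp_mk₀] at hx
  have := (Abelian.Ext.linearEquiv₀ (R := R)).symm.injective hx
  exact congrArg ModuleCat.Hom.hom this

lemma nExt_of_smul_left {s : R} (hs : s ∈ S) (h : ∀ a : A, s • a = 0) (j : ℕ) :
    NExt S A B j := by
  intro e
  refine ⟨s, hs, ?_⟩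
  have h0 : s • 𝟙 (ModuleCat.of R A) = 0 := by
    ext a
    exact h a
  calc s • e = s • ((Abelian.Ext.mk₀ (𝟙 _)).comp e (zero_add j)) := by simp
    _ = 0 := by rw [← Abelian.Ext.smul_comp, ← Abelian.Ext.mk₀_smul, h0]; simp

lemma nExt_of_subsingleton_left [Subsingleton A] (j : ℕ) : NExt S A B j :=
  nExt_of_smul_left S.one_mem (fun _ => Subsingleton.elim _ _) j

lemma NExt.congr_right (e : B ≃ₗ[R] D) {j : ℕ} (h : NExt S A B j) : NExt S A D j := by
  intro x
  obtain ⟨s, hs, h1⟩ := h (x.comp (Abelian.Ext.mk₀ (ModuleCat.ofHom e.symm.toLinearMap))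
    (add_zero j))
  refine ⟨s, hs, ?_⟩
  have h2 : ModuleCat.ofHom e.symm.toLinearMap ≫ ModuleCat.ofHom e.toLinearMap = 𝟙 _ := by
    ext x
    simp
  have h3 : x = (x.comp (Abelian.Ext.mk₀ (ModuleCat.ofHom e.symm.toLinearMap))
    (add_zero j)).comp (Abelian.Ext.mk₀ (ModuleCat.ofHom e.toLinearMap)) (add_zero j) := by
    rw [Abelian.Ext.comp_assoc_of_third_deg_zero, Abelian.Ext.mk₀_comp_mk₀, h2]
    simp
  rw [h3, ← Abelian.Ext.smul_comp, h1, Abelian.Ext.zero_comp]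

lemma nExt_zero_of_inj (hf : Function.Injective f) (h : NExt S Y B 0) : NExt S Y A 0 := by
  rw [nExt_zero_iff] at *
  intro φ
  obtain ⟨s, hs, h1⟩ := h (f ∘ₗ φ)
  refine ⟨s, hs, LinearMap.ext fun y => hf ?_⟩
  have := LinearMap.congr_fun h1 y
  simpa using this

lemma nExt_free [Module.Projective R A] (j : ℕ) : NExt S A B (j + 1) := fun e =>
  ⟨1, S.one_mem, by rw [one_smul]; exact Abelian.Ext.eq_zero_of_projective _⟩

lemma nExt_pi {j : ℕ} (h : NExt S A B j) (b : ℕ) : NExt S A (Fin b → B) j := by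
  induction b with
  | zero =>
    intro e
    refine ⟨1, S.one_mem, ?_⟩
    have h0 : 𝟙 (ModuleCat.of R (Fin 0 → B)) = 0 := by
      exact ModuleCat.hom_ext (LinearMap.ext fun a => funext fun i => i.elim0)
    have : e = e.comp (Abelian.Ext.mk₀ (𝟙 _)) (add_zero j) := by simp
    rw [one_smul, this, h0]
    simp
  | succ b ih =>
    have hs : SES (LinearMap.single R (fun _ : Fin (b + 1) => B) 0)
        (LinearMap.funLeft R B (Fin.succ : Fin b → Fin (b + 1))) := by
      refine ⟨Pi.single_injective (M := fun _ : Fin (b + 1) => B) 0, ?_, ?_⟩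
      · exact LinearMap.funLeft_surjective_of_injective R B _ (Fin.succ_injective b)
      · intro x
        constructor
        · intro hx
          refine ⟨x 0, ?_⟩
          funext i
          refine Fin.cases ?_ (fun i => ?_) i
          · simp
          · have := congrFun hx i
            simp only [LinearMap.funLeft_apply, Pi.zero_apply] at this
            simp [this]
        · rintro ⟨y, rfl⟩
          funext i
          simp [LinearMap.funLeft_apply]
    exact hs.co2 h ih

end ExtTools
section CResolutions

variable {R}
variable {C : Type u} [AddCommGroup C] [Module R C]

variable (R C) in
/-- `T` has a finite resolution `0 → C^{b_t} → ⋯ → C^{b_1} → T → 0` with at most `t` terms. -/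
inductive CR : ℕ → ∀ (T : Type u) [AddCommGroup T] [Module R T], Prop
  | zero (T : Type u) [AddCommGroup T] [Module R T] [Subsingleton T] : CR 0 T
  | succ {t b : ℕ} {T' T : Type u} [AddCommGroup T'] [Module R T'] [AddCommGroup T] [Module R T]
      (f : T' →ₗ[R] (Fin b → C)) (g : (Fin b → C) →ₗ[R] T) (h : SES f g) (hT : CR t T') :
      CR (t + 1) T

variable {S : Submonoid R} {A B D Y : Type u} [AddCommGroup A] [Module R A] [AddCommGroup B]
    [Module R B] [AddCommGroup D] [Module R D] [AddCommGroup Y] [Module R Y]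

lemma nExt_subsingleton_right [Subsingleton B] (j : ℕ) : NExt S A B j := by
  intro e
  refine ⟨1, S.one_mem, ?_⟩
  have h0 : 𝟙 (ModuleCat.of R B) = 0 :=
    ModuleCat.hom_ext (LinearMap.ext fun a => Subsingleton.elim (α := B) _ _)
  have : e = e.comp (Abelian.Ext.mk₀ (𝟙 _)) (add_zero j) := by simp
  rw [one_smul, this, h0]
  simp

lemma CR.nExt {t : ℕ} {T : Type u} [AddCommGroup T] [Module R T] (hT : CR R C t T)
    (hY : ∀ j, NExt S Y C (j + 1)) : ∀ j, NExt S Y T (j + 1) := by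
  induction hT with
  | zero => exact fun j => nExt_subsingleton_right _
  | succ f g h hT ih => exact fun j => h.co3 (nExt_pi (hY j) _) (ih (j + 1))

/-- Dual of the standard free module. -/
def dualPi (b : ℕ) : ((Fin b → R) →ₗ[R] C) ≃ₗ[R] (Fin b → C) :=
  ((Pi.basisFun R (Fin b)).constr R).symm

lemma SES.precomp {f : A →ₗ[R] B} {g : B →ₗ[R] D} (h : SES f g) (e : Y ≃ₗ[R] B) :
    SES (e.symm.toLinearMap ∘ₗ f) (g ∘ₗ e.toLinearMap) := by
  refine ⟨e.symm.injective.comp h.inj, h.surj.comp e.surjective, ?_⟩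
  intro y
  have := h.exact (e y)
  simp only [LinearMap.comp_apply, LinearEquiv.coe_coe]
  rw [this]
  simp only [Set.mem_range, LinearMap.comp_apply, LinearEquiv.coe_coe, LinearEquiv.symm_apply_eq]

lemma CR.step {t b : ℕ} {f : A →ₗ[R] B} {g : B →ₗ[R] D} (h : SES f g)
    (e : (Fin b → C) ≃ₗ[R] B) (hA : CR R C t A) : CR R C (t + 1) D :=
  CR.succ _ _ (h.precomp e) hA

/-- Presentations of finite modules. -/
lemma exists_pres [IsNoetherianRing R] (N : Type u) [AddCommGroup N] [Module R N]
    [Module.Finite R N] : ∃ (b : ℕ) (g : (Fin b → R) →ₗ[R] N),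
      SES (LinearMap.ker g).subtype g := by
  obtain ⟨b, g, hg⟩ := Module.Finite.exists_fin' R N
  exact ⟨b, g, Subtype.val_injective, hg, LinearMap.exact_subtype_ker_map g⟩

/-- Left exactness of the dual and exactness when `Ext¹` vanishes. -/
lemma SES.dual {f : A →ₗ[R] B} {g : B →ₗ[R] D} (h : SES f g) 
    (hD : NExt (⊥ : Submonoid R) D C 1) :
    SES (LinearMap.lcomp R C g) (LinearMap.lcomp R C f) := by
  refine ⟨?_, ?_, ?_⟩
  · exact LinearMap.lcomp_injective_of_surjective g h.surj
  · intro φ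
    obtain ⟨s, hs, ψ, hψ⟩ := h.extend hD φ
    rw [Submonoid.mem_bot] at hs
    exact ⟨ψ, by rw [hs, one_smul] at hψ; exact hψ⟩
  · exact LinearMap.exact_lcomp_of_exact_of_surjective _ h.exact h.surj

/-- The exactness lemma. -/
lemma exactness {t : ℕ} {T : Type u} [AddCommGroup T] [Module R T] (hT : CR R C t T)
    (Y : ℕ → Type u) [∀ k, AddCommGroup (Y k)] [∀ k, Module R (Y k)]
    (d : ∀ k, Y k →ₗ[R] Y (k + 1)) (hd : ∀ k y, d (k + 1) (d k y) = 0)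
    (hY : ∀ k j, NExt (⊥ : Submonoid R) (Y k) C (j + 1))
    (hex : ∀ k, ∀ h : Y (k + 1) →ₗ[R] C, h ∘ₗ d k = 0 → ∃ g : Y (k + 2) →ₗ[R] C,
      g ∘ₗ d (k + 1) = h) :
    ∀ k, t ≤ k + 1 → ∀ h : Y (k + 1) →ₗ[R] T, h ∘ₗ d k = 0 → ∃ g : Y (k + 2) →ₗ[R] T,
      g ∘ₗ d (k + 1) = h := by
  induction hT with
  | zero T => exact fun k _ h _ => ⟨0, LinearMap.ext fun x => Subsingleton.elim _ _⟩
  | @succ t b T' T _ _ _ _ f g hs hT ih =>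
    intro k hk h hh
    have hexb : ∀ h : Y (k + 1) →ₗ[R] (Fin b → C), h ∘ₗ d k = 0 →
        ∃ g : Y (k + 2) →ₗ[R] (Fin b → C), g ∘ₗ d (k + 1) = h := by
      intro h hh
      choose G hG using fun i : Fin b => hex k (LinearMap.proj i ∘ₗ h)
        (by rw [LinearMap.comp_assoc, hh, LinearMap.comp_zero])
      refine ⟨LinearMap.pi G, LinearMap.ext fun x => funext fun i => ?_⟩
      exact LinearMap.congr_fun (hG i) x
    obtain ⟨s, h1, l, hl⟩ := hs.lift (hT.nExt (hY (k + 1)) 0) h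
    rw [Submonoid.mem_bot] at h1
    rw [h1, one_smul] at hl
    have key : ∃ m : Y (k + 1) →ₗ[R] T', (f ∘ₗ m) ∘ₗ d k = l ∘ₗ d k := by
      have h2 : ∀ y, ∃ x, f x = l (d k y) := by
        intro y
        refine (hs.exact _).1 ?_
        have := LinearMap.congr_fun hh y
        rw [← hl] at this
        exact this
      let F := LinearEquiv.ofInjective f hs.inj
      let q : Y k →ₗ[R] T' := F.symm.toLinearMap ∘ₗ
        ((l ∘ₗ d k).codRestrict (LinearMap.range f) h2)
      have hq : ∀ y, f (q y) = l (d k y) := by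
        intro y
        have := F.apply_symm_apply ((l ∘ₗ d k).codRestrict (LinearMap.range f) h2 y)
        exact congrArg Subtype.val this
      cases k with
      | zero =>
        have : t = 0 := by omega
        subst this
        cases hT
        refine ⟨0, LinearMap.ext fun y => ?_⟩
        have := hq y
        rw [Subsingleton.elim (q y) 0] at this
        simpa using this
      | succ k =>
        obtain ⟨m, hm⟩ := ih k (by omega) q (by
          refine LinearMap.ext fun y => hs.inj ?_
          rw [LinearMap.comp_apply, hq, hd]
          simp)
        refine ⟨m, LinearMap.ext fun y => ?_⟩
        rw [← hm] at hq
        exact hq y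
    obtain ⟨m, hm⟩ := key
    obtain ⟨G, hG⟩ := hexb (l - f ∘ₗ m) (by rw [LinearMap.sub_comp, hm, sub_self])
    refine ⟨g ∘ₗ G, ?_⟩
    rw [LinearMap.comp_assoc, hG, LinearMap.comp_sub, hl, ← LinearMap.comp_assoc,
      hs.exact.linearMap_comp_eq_zero]
    simp

end CResolutions
section GLemma

variable {R}
variable {C : Type u} [AddCommGroup C] [Module R C]

lemma lemmaG [IsNoetherianRing R] (t : ℕ) : ∀ (r : ℕ) (N : Type u) [AddCommGroup N] [Module R N]
    [Module.Finite R N], CR R C r (N →ₗ[R] C) →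
    (∀ j < t, NExt (⊥ : Submonoid R) N C (j + 1)) → ¬ NExt (⊥ : Submonoid R) N C (t + 1) →
    ∃ (T : Type u) (_ : AddCommGroup T) (_ : Module R T) (w : T), CR R C (r + t + 2) T ∧ w ≠ 0 ∧
      ∀ S : Submonoid R, NExt S N C (t + 1) → ∃ s ∈ S, s • w = 0 := by
  induction t with
  | zero =>
    intro r N _ _ _ hr _ hn
    obtain ⟨b, g, hg⟩ := exists_pres (R := R) N
    have hφ : ∃ φ : LinearMap.ker g →ₗ[R] C, ∀ ψ : (Fin b → R) →ₗ[R] C,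
        ψ ∘ₗ (LinearMap.ker g).subtype ≠ φ := by
      by_contra! hcon
      refine hn (hg.of_extend (fun φ => ?_) (nExt_free 0))
      obtain ⟨ψ, hψ⟩ := hcon φ
      exact ⟨1, one_mem _, ψ, by rw [one_smul, hψ]⟩
    obtain ⟨φ, hφ⟩ := hφ
    obtain ⟨b₁, π, hπ⟩ := exists_pres (R := R) (LinearMap.ker g)
    let d : ((Fin b → R) →ₗ[R] C) →ₗ[R] ((Fin b₁ → R) →ₗ[R] C) :=
      LinearMap.lcomp R C ((LinearMap.ker g).subtype ∘ₗ π)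
    have hdapp : ∀ ψ, d ψ = (ψ ∘ₗ (LinearMap.ker g).subtype) ∘ₗ π := fun ψ => rfl
    have hcancel : ∀ α β : LinearMap.ker g →ₗ[R] C, α ∘ₗ π = β ∘ₗ π → α = β :=
      fun α β h => (LinearMap.cancel_right hπ.surj).1 h
    have h1 : SES (LinearMap.lcomp R C g) d.rangeRestrict := by
      refine ⟨LinearMap.lcomp_injective_of_surjective g hg.surj,
        LinearMap.surjective_rangeRestrict _, ?_⟩
      intro ψ
      rw [← (LinearMap.exact_lcomp_of_exact_of_surjective C hg.exact hg.surj) ψ]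
      constructor
      · intro h
        have h2 : d ψ = 0 := congrArg Subtype.val h
        rw [hdapp] at h2
        exact hcancel _ 0 (h2.trans (LinearMap.zero_comp _).symm)
      · intro h
        refine Subtype.ext ?_
        change d ψ = 0
        rw [hdapp]
        have h2 : ψ ∘ₗ (LinearMap.ker g).subtype = 0 := h
        rw [h2, LinearMap.zero_comp]
    have h2 : SES (LinearMap.range d).subtype (LinearMap.range d).mkQ :=
      ⟨Subtype.val_injective, Submodule.mkQ_surjective _, LinearMap.exact_subtype_mkQ _⟩
    refine ⟨_, inferInstance, inferInstance, (LinearMap.range d).mkQ (φ ∘ₗ π),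
      CR.step h2 (dualPi b₁).symm (CR.step h1 (dualPi b).symm hr), ?_, ?_⟩
    · intro h
      rw [Submodule.mkQ_apply, Submodule.Quotient.mk_eq_zero] at h
      obtain ⟨ψ, hψ⟩ := h
      exact hφ ψ (hcancel _ _ hψ)
    · intro S hS
      obtain ⟨s, hs, ψ, hψ⟩ := hg.extend hS φ
      refine ⟨s, hs, ?_⟩
      rw [← map_smul, Submodule.mkQ_apply, Submodule.Quotient.mk_eq_zero]
      exact ⟨ψ, by rw [hdapp, hψ, LinearMap.smul_comp]⟩
  | succ t ih =>
    intro r N _ _ _ hr hj hn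
    obtain ⟨b, g, hg⟩ := exists_pres (R := R) N
    have hK := CR.step (hg.dual (hj 0 (by omega))) (dualPi b).symm hr
    obtain ⟨T, i1, i2, w, hT, hw, hS⟩ := ih (r + 1) (LinearMap.ker g) hK
      (fun j hjt => hg.contra1 (nExt_free j) (hj (j + 1) (by omega)))
      (fun h => hn (hg.contra3 h (nExt_free _)))
    refine ⟨T, i1, i2, w, ?_, hw, fun S h => hS S (hg.contra1 (nExt_free _) h)⟩
    convert hT using 1
    omega

lemma lemmaG' [IsNoetherianRing R] (t : ℕ) (N : Type u) [AddCommGroup N] [Module R N]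
    [Module.Finite R N] (hj : ∀ j < t, NExt (⊥ : Submonoid R) N C j)
    (hn : ¬ NExt (⊥ : Submonoid R) N C t) :
    ∃ (T : Type u) (_ : AddCommGroup T) (_ : Module R T) (w : T), CR R C (t + 1) T ∧ w ≠ 0 ∧
      ∀ S : Submonoid R, NExt S N C t → ∃ s ∈ S, s • w = 0 := by
  cases t with
  | zero =>
    obtain ⟨b, g, hg⟩ := exists_pres (R := R) N
    have hφ : ∃ φ : N →ₗ[R] C, φ ≠ 0 := by
      by_contra! hcon
      exact hn (nExt_zero_iff.2 fun φ => ⟨1, one_mem _, by rw [hcon φ, smul_zero]⟩)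
    obtain ⟨φ, hφ⟩ := hφ
    have h1 : SES (0 : PUnit.{u+1} →ₗ[R] ((Fin b → R) →ₗ[R] C)) LinearMap.id := by
      refine ⟨Function.injective_of_subsingleton _, Function.surjective_id, ?_⟩
      intro x
      simp [eq_comm]
    refine ⟨_, inferInstance, inferInstance, φ ∘ₗ g, CR.step h1 (dualPi b).symm (CR.zero _), ?_, ?_⟩
    · intro h
      exact hφ ((LinearMap.cancel_right hg.surj).1 (by rw [h, LinearMap.zero_comp]))
    · intro S hS
      obtain ⟨s, hs, h⟩ := nExt_zero_iff.1 hS φ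
      exact ⟨s, hs, by rw [← LinearMap.smul_comp, h, LinearMap.zero_comp]⟩
  | succ t =>
    have : Subsingleton (N →ₗ[R] C) := by
      refine subsingleton_of_forall_eq 0 fun φ => ?_
      obtain ⟨s, hs, h⟩ := nExt_zero_iff.1 (hj 0 (by omega)) φ
      rw [Submonoid.mem_bot] at hs
      rwa [hs, one_smul] at h
    have h := lemmaG t 0 N (CR.zero _) (fun j hjt => hj (j + 1) (by omega)) hn
    rwa [Nat.zero_add] at h

lemma fromC [IsNoetherianRing R] {N : Type u} [AddCommGroup N] [Module R N] (j : ℕ) :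
    (∀ k ≤ j, NExt (⊥ : Submonoid R) N C k) → ∀ (G : Type u) [AddCommGroup G] [Module R G]
    [Module.Finite R G], (∀ k, NExt (⊥ : Submonoid R) G C (k + 1)) →
    NExt (⊥ : Submonoid R) N (G →ₗ[R] C) j := by
  induction j with
  | zero =>
    intro h G _ _ _ hG
    obtain ⟨b, g, hg⟩ := exists_pres (R := R) G
    exact nExt_zero_of_inj (hg.dual (hG 0)).inj ((nExt_pi (h 0 le_rfl) b).congr_right
      (dualPi b).symm)
  | succ j ih =>
    intro h G _ _ _ hG
    obtain ⟨b, g, hg⟩ := exists_pres (R := R) G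
    exact (hg.dual (hG 0)).co1 (ih (fun k hk => h k (by omega)) _
      (fun k => hg.contra1 (nExt_free k) (hG (k + 1))))
      ((nExt_pi (h (j + 1) le_rfl) b).congr_right (dualPi b).symm)

end GLemma
section MainC

variable {R}

lemma unif_null {S : Submonoid R} {Q : Type u} [AddCommGroup Q] [Module R Q] [Module.Finite R Q]
    (h : ∀ q : Q, ∃ s ∈ S, s • q = 0) : ∃ s ∈ S, ∀ q : Q, s • q = 0 := by
  obtain ⟨G, hG⟩ := (Module.Finite.fg_top : (⊤ : Submodule R Q).FG)
  choose s hs hsq using h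
  refine ⟨∏ g ∈ G, s g, Submonoid.prod_mem _ fun g _ => hs g, fun q => ?_⟩
  have hq : q ∈ Submodule.span R (G : Set Q) := hG ▸ Submodule.mem_top
  induction hq using Submodule.span_induction with
  | mem x hx =>
    obtain ⟨c, hc⟩ := Finset.dvd_prod_of_mem s hx
    rw [hc, mul_comm, mul_smul, hsq, smul_zero]
  | zero => exact smul_zero _
  | add x y _ _ hx hy => rw [smul_add, hx, hy, add_zero]
  | smul a x _ hx => rw [smul_comm, hx, smul_zero]

lemma ses_range {A B D : Type u} [AddCommGroup A] [Module R A] [AddCommGroup B]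
    [Module R B] [AddCommGroup D] [Module R D] {f : A →ₗ[R] B} {g : B →ₗ[R] D}
    (hf : Function.Injective f) (h : Function.Exact f g) : SES f g.rangeRestrict := by
  refine ⟨hf, LinearMap.surjective_rangeRestrict _, fun x => ?_⟩
  rw [← h x]
  exact Subtype.ext_iff

lemma ses_quot {D : Type u} [AddCommGroup D] [Module R D] (N : Submodule R D) :
    SES N.subtype N.mkQ :=
  ⟨Subtype.val_injective, Submodule.mkQ_surjective _, LinearMap.exact_subtype_mkQ _⟩

variable {C : Type u} [AddCommGroup C] [Module R C]

theorem mainC [IsNoetherianRing R] [Module.Finite R C]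
    (M X : ℕ → Type u) [∀ k, AddCommGroup (M k)] [∀ k, Module R (M k)]
    [∀ k, AddCommGroup (X k)] [∀ k, Module R (X k)] [∀ k, Module.Finite R (M k)]
    (f : ∀ k, M (k + 1) →ₗ[R] X k) (g : ∀ k, X k →ₗ[R] M k) (hs : ∀ k, SES (f k) (g k))
    (hX1 : ∀ k j, NExt (⊥ : Submonoid R) (X k) C (j + 1))
    (hX2 : ∀ k j, NExt (⊥ : Submonoid R) (X k →ₗ[R] C) C (j + 1))
    (hX3 : ∀ k, ∀ φ : (X k →ₗ[R] C) →ₗ[R] C, ∃ x, ∀ y, φ y = y x)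
    (hX4 : ∀ k, ∀ x : X k, (∀ y : X k →ₗ[R] C, y x = 0) → x = 0)
    (n : ℕ) (hn : ∀ k, n < k → Subsingleton (M k))
    (i : ℕ) (hi : 0 < i) (E : Type u) [AddCommGroup E] [Module R E] [Module.Finite R E]
    (hE : ∀ S : Submonoid R, NExt S (M 0) C i → ∀ e : E, ∃ s ∈ S, s • e = 0) :
    ∀ j < i, NExt (⊥ : Submonoid R) E C j := by
  classical
  by_contra! hcon
  obtain ⟨t, ⟨hti, htn⟩, hmin⟩ : ∃ t, (t < i ∧ ¬ NExt (⊥ : Submonoid R) E C t) ∧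
      ∀ j < t, NExt (⊥ : Submonoid R) E C j := by
    refine ⟨Nat.find hcon, Nat.find_spec hcon, fun j hj => ?_⟩
    by_contra hh
    exact Nat.find_min hcon hj ⟨hj.trans (Nat.find_spec hcon).1, hh⟩
  obtain ⟨T, _, _, w, hT, hw, hwS⟩ := lemmaG' t E hmin htn
  obtain ⟨p, hp, hwp⟩ := exists_le_isAssociatedPrime_of_isNoetherianRing R w hw
  obtain ⟨hpp, ι, hι⟩ := (isAssociatedPrime_iff_exists_injective_linearMap p T).1 hp
  let S := p.primeCompl
  have hbot : (⊥ : Submonoid R) ≤ S := bot_le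
  -- the shift
  have hshift : ∀ k j, NExt S (M k) C (j + 1) ↔ NExt S (M 0) C (k + j + 1) := by
    intro k
    induction k with
    | zero => intro j; rw [Nat.zero_add]
    | succ k ih =>
      intro j
      have h1 : NExt S (M (k + 1)) C (j + 1) ↔ NExt S (M k) C (j + 1 + 1) :=
        ⟨fun h => (hs k).contra3 h ((hX1 k _).mono hbot),
          fun h => (hs k).contra1 ((hX1 k _).mono hbot) h⟩
      rw [h1, ih, show k + (j + 1) + 1 = k + 1 + j + 1 by omega]
  have hvan : ∀ q, n + 2 ≤ q → NExt S (M 0) C q := by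
    intro q hq
    obtain ⟨c, rfl⟩ := Nat.exists_eq_add_of_le hq
    have := hn (n + 1) (by omega)
    have h1 := (hshift (n + 1) c).1 (nExt_of_subsingleton_left _)
    rwa [show n + 1 + c + 1 = n + 2 + c by omega] at h1
  have hnot : ¬ NExt S (M 0) C i := by
    intro h
    obtain ⟨s, hsS, hsE⟩ := unif_null (hE S h)
    obtain ⟨s', hs', h'⟩ := hwS S (nExt_of_smul_left hsS hsE t)
    refine hs' (hwp ?_)
    rw [Submodule.mem_colon_singleton, h']
    exact Submodule.zero_mem _
  obtain ⟨m, him, hmn, hmax⟩ : ∃ m, i ≤ m + 1 ∧ ¬ NExt S (M 0) C (m + 1) ∧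
      ∀ q, m + 1 < q → NExt S (M 0) C q := by
    have hb : i ≤ n + 2 := by
      by_contra hh
      exact hnot (hvan i (by omega))
    have h1 := Nat.findGreatest_spec (P := fun q => ¬ NExt S (M 0) C q) hb hnot
    have h2 := Nat.le_findGreatest (P := fun q => ¬ NExt S (M 0) C q) hb hnot
    have h3 : ∀ k, Nat.findGreatest (fun q => ¬ NExt S (M 0) C q) (n + 2) < k → k ≤ n + 2 →
        ¬ ¬ NExt S (M 0) C k := fun k h h' => Nat.findGreatest_is_greatest h h'
    generalize Nat.findGreatest (fun q => ¬ NExt S (M 0) C q) (n + 2) = q0 at h1 h2 h3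
    obtain ⟨m, rfl⟩ : ∃ m, q0 = m + 1 := ⟨q0 - 1, by omega⟩
    refine ⟨m, h2, h1, fun q hq => ?_⟩
    by_cases hqn : q ≤ n + 2
    · exact not_not.1 (h3 q hq hqn)
    · exact hvan q (by omega)
  -- the dual complex
  let a : ∀ k, (M k →ₗ[R] C) →ₗ[R] (X k →ₗ[R] C) := fun k => LinearMap.lcomp R C (g k)
  let b : ∀ k, (X k →ₗ[R] C) →ₗ[R] (M (k + 1) →ₗ[R] C) := fun k => LinearMap.lcomp R C (f k)
  have hab : ∀ k, Function.Exact (a k) (b k) := fun k =>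
    LinearMap.exact_lcomp_of_exact_of_surjective C (hs k).exact (hs k).surj
  have hainj : ∀ k, Function.Injective (a k) := fun k =>
    LinearMap.lcomp_injective_of_surjective (g k) (hs k).surj
  let d : ∀ k, (X k →ₗ[R] C) →ₗ[R] (X (k + 1) →ₗ[R] C) := fun k => a (k + 1) ∘ₗ b k
  have hd : ∀ k y, d (k + 1) (d k y) = 0 := by
    intro k y
    change a (k + 2) (b (k + 1) (a (k + 1) (b k y))) = 0
    rw [(hab (k + 1)).apply_apply_eq_zero, map_zero]
  have hex : ∀ k, ∀ h : (X (k + 1) →ₗ[R] C) →ₗ[R] C, h ∘ₗ d k = 0 →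
      ∃ G : (X (k + 2) →ₗ[R] C) →ₗ[R] C, G ∘ₗ d (k + 1) = h := by
    intro k h hh
    obtain ⟨x, hx⟩ := hX3 _ h
    have h1 : f k (g (k + 1) x) = 0 := by
      refine hX4 _ _ fun y => ?_
      have := LinearMap.congr_fun hh y
      rw [LinearMap.comp_apply, hx] at this
      exact this
    have h2 : g (k + 1) x = 0 := (hs k).inj (by rw [h1, map_zero])
    obtain ⟨x', hx'⟩ := ((hs (k + 1)).exact x).1 h2
    obtain ⟨x'', hx''⟩ := (hs (k + 2)).surj x'
    refine ⟨LinearMap.applyₗ x'', LinearMap.ext fun y => ?_⟩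
    rw [hx y, ← hx', ← hx'']
    rfl
  have hQnull : ∀ k, NExt S (M k) C 1 → ∀ q : (M (k + 1) →ₗ[R] C) ⧸ LinearMap.range (b k),
      ∃ s ∈ S, s • q = 0 := by
    intro k h q
    obtain ⟨z, rfl⟩ := Submodule.mkQ_surjective _ q
    obtain ⟨s, hsS, ψ, hψ⟩ := (hs k).extend h z
    refine ⟨s, hsS, ?_⟩
    rw [← map_smul, Submodule.mkQ_apply, Submodule.Quotient.mk_eq_zero]
    exact ⟨ψ, hψ⟩
  have hB : ∀ c k, m + 1 ≤ k → n ≤ k + c → ∀ j, NExt S (LinearMap.range (b k)) T (j + 1) := by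
    intro c
    induction c with
    | zero =>
      intro k hk hnk j
      have := hn (k + 1) (by omega)
      have h2 : Subsingleton (LinearMap.range (b k)) := by infer_instance
      exact nExt_of_subsingleton_left _
    | succ c ih =>
      intro k hk hnk j
      have h1 := ses_range (hainj (k + 1)) (hab (k + 1))
      have h2 : NExt S (M (k + 1) →ₗ[R] C) T (j + 1) :=
        h1.contra1 (hT.nExt (fun j => (hX2 (k + 1) j).mono hbot) j)
          (ih (k + 1) (by omega) (by omega) (j + 1))
      obtain ⟨s, hsS, hsQ⟩ := unif_null (hQnull k ((hshift k 0).2 (hmax _ (by omega))))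
      exact (ses_quot (LinearMap.range (b k))).contra1 h2 (nExt_of_smul_left hsS hsQ _)
  -- a nonzero map to the residue domain
  have hQ : ∃ h0 : ((M (m + 1) →ₗ[R] C) ⧸ LinearMap.range (b m)) →ₗ[R] (R ⧸ p), h0 ≠ 0 := by
    by_contra! hcon2
    have hss : Subsingleton (((M (m + 1) →ₗ[R] C) ⧸ LinearMap.range (b m)) →ₗ[R] (R ⧸ p)) :=
      subsingleton_of_forall_eq 0 hcon2
    obtain ⟨r, hr, hreg⟩ := IsSMulRegular.subsingleton_linearMap_iff.1 hss
    have hrp : r ∈ S := by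
      intro hrp
      have h1 : r • (1 : R ⧸ p) = r • (0 : R ⧸ p) := by
        rw [smul_zero, Algebra.smul_def, mul_one]
        exact Ideal.Quotient.eq_zero_iff_mem.2 hrp
      have := hreg h1
      exact one_ne_zero this
    refine hmn ((hshift m 0).1 ((hs m).of_extend (fun φ => ?_) ((hX1 m 0).mono hbot)))
    have h1 := Module.mem_annihilator.1 hr (Submodule.Quotient.mk φ)
    rw [← Submodule.Quotient.mk_smul, Submodule.Quotient.mk_eq_zero] at h1
    obtain ⟨ψ, hψ⟩ := h1
    exact ⟨r, hrp, ψ, hψ⟩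
  obtain ⟨h0, hh0⟩ := hQ
  have hses := ses_range (hainj (m + 1)) (hab (m + 1))
  obtain ⟨s, hsS, H, hH⟩ := hses.extend (hB n (m + 1) le_rfl (by omega) 0)
    (ι ∘ₗ h0 ∘ₗ (LinearMap.range (b m)).mkQ)
  have hHd : H ∘ₗ d m = 0 := by
    refine LinearMap.ext fun y => ?_
    have := LinearMap.congr_fun hH (b m y)
    have h1 : (LinearMap.range (b m)).mkQ (b m y) = 0 := by
      rw [Submodule.mkQ_apply, Submodule.Quotient.mk_eq_zero]
      exact ⟨y, rfl⟩
    simp only [LinearMap.smul_apply, LinearMap.comp_apply, h1, map_zero, smul_zero] at this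
    exact this
  obtain ⟨G, hG⟩ := exactness hT (fun k => X k →ₗ[R] C) d hd hX2 hex m (by omega) H hHd
  refine hh0 (LinearMap.ext fun q => ?_)
  obtain ⟨z, rfl⟩ := Submodule.mkQ_surjective _ q
  have h1 : H (a (m + 1) z) = 0 := by
    rw [← hG]
    change G (a (m + 2) (b (m + 1) (a (m + 1) z))) = 0
    rw [(hab (m + 1)).apply_apply_eq_zero, map_zero, map_zero]
  have h2 := LinearMap.congr_fun hH z
  rw [LinearMap.comp_apply, h1] at h2
  have h3 : s • h0 ((LinearMap.range (b m)).mkQ z) = 0 := by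
    apply hι
    rw [map_smul, map_zero]
    exact h2.symm
  rw [Algebra.smul_def, mul_eq_zero] at h3
  rcases h3 with h3 | h3
  · exact absurd (Ideal.Quotient.eq_zero_iff_mem.1 h3) hsS
  · exact h3

end MainC
section Chain

variable {R}

lemma s8_nExt {M N : ModuleCat.{u} R} {j : ℕ} (hj : 0 < j) (h : Subsingleton (ExtM R M N j))
    (S : Submonoid R) : NExt S M N j := by
  obtain ⟨j, rfl⟩ : ∃ k, j = k + 1 := ⟨j - 1, by omega⟩
  obtain ⟨e⟩ := s8_extM_equiv M N j
  exact nExt_of_subsingleton e.symm.injective.subsingleton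

lemma s8_zero_reflexive (C : ModuleCat.{u} R) :
    IsTotallyCReflexive R C (ModuleCat.of R PUnit.{u+1}) := by
  have h : ∀ (Z : ModuleCat.{u} R), Subsingleton Z → ∀ i : ℕ, 0 < i →
      Subsingleton (ExtM R Z C i) := by
    intro Z hZ i hi
    obtain ⟨j, rfl⟩ : ∃ k, i = k + 1 := ⟨i - 1, by omega⟩
    obtain ⟨e⟩ := s8_extM_equiv Z C j
    have h1 : NExt (⊥ : Submonoid R) Z C (j + 1) := nExt_of_subsingleton_left _
    have := h1.subsingleton
    exact e.injective.subsingleton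
  refine ⟨inferInstanceAs (Module.Finite R PUnit.{u+1}), ⟨?_, ?_⟩, h _ ?_, h _ ?_⟩
  · intro x y _
    exact Subsingleton.elim (α := PUnit.{u+1}) x y
  · intro φ
    refine ⟨PUnit.unit, LinearMap.ext fun y => ?_⟩
    have hy : y = 0 := LinearMap.ext fun x => by
      rw [show x = 0 from Subsingleton.elim (α := PUnit.{u+1}) x 0, map_zero, map_zero]
    rw [hy, map_zero, map_zero]
  · exact inferInstanceAs (Subsingleton PUnit.{u+1})
  · exact inferInstanceAs (Subsingleton (PUnit.{u+1} →ₗ[R] C))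

/-- One step of the resolution. -/
lemma s8_step (C : ModuleCat.{u} R) (x : {x : ℕ × ModuleCat.{u} R // gcdimLE R C x.1 x.2}) :
    ∃ (y : {x : ℕ × ModuleCat.{u} R // gcdimLE R C x.1 x.2}) (X : ModuleCat.{u} R)
      (f : y.1.2 →ₗ[R] X) (g : X →ₗ[R] x.1.2), SES f g ∧ IsTotallyCReflexive R C X ∧
      y.1.1 = x.1.1 - 1 ∧ (x.1.1 = 0 → Subsingleton y.1.2) := by
  obtain ⟨⟨n, M⟩, hx⟩ := x
  cases n with
  | zero =>
    refine ⟨⟨(0, ModuleCat.of R PUnit.{u+1}), s8_zero_reflexive C⟩, M, 0, LinearMap.id, ?_, hx,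
      rfl, fun _ => inferInstanceAs (Subsingleton PUnit.{u+1})⟩
    refine ⟨?_, Function.surjective_id, ?_⟩
    · intro x y _
      exact Subsingleton.elim (α := PUnit.{u+1}) x y
    · intro x
      simp [eq_comm]
  | succ n =>
    obtain ⟨X, K, f, g, hf, hg, hfg, hX, hK⟩ := hx
    refine ⟨⟨(n, K), hK⟩, X, f, g, ⟨hf, hg, LinearMap.exact_iff.2 hfg⟩, hX, rfl, ?_⟩
    intro h
    simp at h

lemma s8_chain (C : ModuleCat.{u} R) (n : ℕ) (M : ModuleCat.{u} R) (h : gcdimLE R C n M) :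
    ∃ (N X : ℕ → ModuleCat.{u} R) (f : ∀ k, N (k + 1) →ₗ[R] X k) (g : ∀ k, X k →ₗ[R] N k),
      (∀ k, SES (f k) (g k)) ∧ (∀ k, IsTotallyCReflexive R C (X k)) ∧ N 0 = M ∧
      ∀ k, n < k → Subsingleton (N k) := by
  choose y X f g h1 h2 h3 h4 using s8_step C
  let st : ℕ → {x : ℕ × ModuleCat.{u} R // gcdimLE R C x.1 x.2} :=
    fun k => Nat.rec ⟨(n, M), h⟩ (fun _ x => y x) k
  have hst : ∀ k, (st k).1.1 = n - k := by
    intro k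
    induction k with
    | zero => rfl
    | succ k ih =>
      change (y (st k)).1.1 = _
      rw [h3, ih]
      omega
  refine ⟨fun k => (st k).1.2, fun k => X (st k), fun k => f (st k), fun k => g (st k),
    fun k => h1 _, fun k => h2 _, rfl, ?_⟩
  intro k hk
  obtain ⟨k, rfl⟩ : ∃ j, k = j + 1 := ⟨k - 1, by omega⟩
  exact h4 (st k) (by rw [hst]; omega)

end Chain

/-- if `M` is a finite module of finite `G_C`-dimension, then
`grade_R(Ext_R^i(M,C)) ≥ i` for every `i > 0`. -/
theorem statement8 [IsNoetherianRing R] (hsp : IsSemiperfectRing R)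
    (C : ModuleCat.{u} R) (hC : IsSemidualizing R C)
    (M : ModuleCat.{u} R) (hMfin : Module.Finite R ↥M)
    (hfin : gcdim R C M ≠ ⊤) :
    ∀ i : ℕ, 0 < i → (i : ℕ∞) ≤ gradeR R (ExtM R M C i) := by
  intro i hi
  obtain ⟨n, hn⟩ : ∃ n, gcdimLE R C n M := by
    by_contra! hcon
    apply hfin
    have h0 : {n | gcdimLE R C n M} = ∅ := Set.eq_empty_of_forall_notMem hcon
    rw [gcdim, h0, Set.image_empty, sInf_empty]
  obtain ⟨hCfin, hCbij, hCext⟩ := hC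
  obtain ⟨N, X, f, g, hs, hX, rfl, hN⟩ := s8_chain C n M hn
  obtain ⟨i', rfl⟩ : ∃ k, i = k + 1 := ⟨i - 1, by omega⟩
  obtain ⟨e⟩ := s8_extM_equiv (N 0) C i'
  have hNfin : ∀ k, Module.Finite R (N k) := fun k =>
    have := (hX k).1
    Module.Finite.of_surjective (g k) (hs k).surj
  have hEfin : Module.Finite R (ExtM R (N 0) C (i' + 1)) := by
    have := ModuleCat.finite_ext R (N 0) C (i' + 1)
    exact Module.Finite.equiv e.symm
  have hmain : ∀ j < i' + 1, NExt (⊥ : Submonoid R) (ExtM R (N 0) C (i' + 1)) C j := by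
    refine mainC (C := C) (fun k => N k) (fun k => X k) f g hs
      (fun k j => s8_nExt (by omega) ((hX k).2.2.1 _ (by omega)) _)
      (fun k j => s8_nExt (by omega) ((hX k).2.2.2 _ (by omega)) _)
      ?_ ?_ n hN (i' + 1) hi _ ?_
    · intro k φ
      obtain ⟨x, hx⟩ := (hX k).2.1.2 φ
      exact ⟨x, fun y => by rw [← hx]; rfl⟩
    · intro k x hx
      apply (hX k).2.1.1
      rw [map_zero]
      exact LinearMap.ext fun y => hx y
    · intro S hS z
      obtain ⟨s, hsS, h⟩ := hS (e z)
      refine ⟨s, hsS, e.injective ?_⟩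
      rw [map_smul, map_zero]
      exact h
  let hom : R ≃ₗ[R] (C →ₗ[R] C) := LinearEquiv.ofBijective
    (LinearMap.toSpanSingleton R (C →ₗ[R] C) LinearMap.id) hCbij
  have hmainR : ∀ j < i' + 1, NExt (⊥ : Submonoid R) (ExtM R (N 0) C (i' + 1)) R j := by
    intro j hj
    exact (fromC j (fun k hk => hmain k (by omega)) C
      (fun k => s8_nExt (by omega) (hCext _ (by omega)) _)).congr_right hom.symm
  rw [gradeR]
  refine le_sInf ?_
  rintro _ ⟨j, hj, rfl⟩
  by_contra hlt
  have hlt' : j < i' + 1 := by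
    rw [not_le] at hlt
    exact Nat.cast_lt.1 hlt
  apply hj
  have hz := hmainR j hlt'
  cases j with
  | zero =>
    refine s8_extM_zero _ _ fun φ => ?_
    obtain ⟨s, hsS, h⟩ := nExt_zero_iff.1 hz φ.hom
    rw [Submonoid.mem_bot] at hsS
    rw [hsS, one_smul] at h
    exact ModuleCat.hom_ext h
  | succ j =>
    obtain ⟨e'⟩ := s8_extM_equiv (ExtM R (N 0) C (i' + 1)) (ModuleCat.of R R) j
    have := hz.subsingleton
    exact e'.injective.subsingleton

end
end

section
/- Let k > 0 be an integer and let 0 → N → X_k → ⋯ → X_1 → M → 0 be an exact sequence of finite R-modules with Ext_R^i(X_j, C) = 0 for all i > 0 and all j = 1, …, k. If r.grade_R(M,C) > k, then r.grade_R(N,C) = r.grade_R(M,C) − k (with the convention that both sides are ∞ when r.grade_R(M,C) = ∞). -/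
open CategoryTheory TensorProduct

noncomputable section

universe u

variable (R : Type u) [CommRing R]

lemma extM_iff (M C : ModuleCat.{u} R) (P : ProjectiveResolution M) (p : ℕ) :
    Subsingleton (ExtM R M C (p+1)) ↔
      ∀ f : P.complex.X (p+1) ⟶ C, P.complex.d (p+2) (p+1) ≫ f = 0 →
        ∃ g : P.complex.X p ⟶ C, P.complex.d (p+1) p ≫ g = f := by
  rw [← ModuleCat.isZero_iff_subsingleton]
  unfold ExtM
  rw [Iso.isZero_iff (P.isoExt (p+1) C), ← HomologicalComplex.exactAt_iff_isZero_homology,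
    HomologicalComplex.exactAt_iff' _ p (p+1) (p+2) (by simp) (by simp),
    ShortComplex.moduleCat_exact_iff]
  rfl

lemma extM_iff_ext (M C : ModuleCat.{u} R) (p : ℕ) :
    Subsingleton (ExtM R M C (p+1)) ↔ Subsingleton (Abelian.Ext.{u} M C (p+1)) := by
  have P : ProjectiveResolution M := projectiveResolution M
  rw [extM_iff R M C P]
  constructor
  · intro h
    refine subsingleton_of_forall_eq 0 fun α => ?_
    obtain ⟨f, hf, rfl⟩ := P.extMk_surjective α (p+2) rfl
    exact (P.extMk_eq_zero_iff f (p+2) rfl hf p rfl).2 (h f hf)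
  · intro h f hf
    exact (P.extMk_eq_zero_iff f (p+2) rfl hf p rfl).1 (Subsingleton.elim _ _)

lemma extM_shift (C X K M : ModuleCat.{u} R) (f : ↥K →ₗ[R] ↥X) (g : ↥X →ₗ[R] ↥M)
    (hf : Function.Injective f) (hg : Function.Surjective g)
    (hfg : LinearMap.ker g = LinearMap.range f)
    (hX : ∀ i : ℕ, 0 < i → Subsingleton (ExtM R X C i)) (p : ℕ) :
    Subsingleton (ExtM R K C (p+1)) ↔ Subsingleton (ExtM R M C (p+2)) := by
  rw [extM_iff_ext, extM_iff_ext]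
  have h1 := (extM_iff_ext R X C p).1 (hX _ (by omega))
  have h2 := (extM_iff_ext R X C (p+1)).1 (hX _ (by omega))
  let S : ShortComplex (ModuleCat.{u} R) := ShortComplex.mk (ModuleCat.ofHom f) (ModuleCat.ofHom g)
    (by
      ext x
      have : f x ∈ LinearMap.ker g := hfg ▸ LinearMap.mem_range_self f x
      exact this)
  have hS : S.ShortExact :=
    { exact := by
        rw [ShortComplex.moduleCat_exact_iff]
        intro x hx
        have : x ∈ LinearMap.range f := hfg ▸ hx
        exact this
      mono_f := (ModuleCat.mono_iff_injective _).2 hf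
      epi_g := (ModuleCat.epi_iff_surjective _).2 hg }
  constructor
  · intro h
    refine subsingleton_of_forall_eq 0 fun α => ?_
    obtain ⟨x, rfl⟩ := Abelian.Ext.contravariant_sequence_exact₃ hS C α
      (@Subsingleton.elim _ h2 _ _) (n₀ := p+1) (by omega)
    rw [@Subsingleton.elim _ h x 0, Abelian.Ext.comp_zero]
  · intro h
    refine subsingleton_of_forall_eq 0 fun α => ?_
    obtain ⟨x, rfl⟩ := Abelian.Ext.contravariant_sequence_exact₁ hS C α (n₁ := p+2) (by omega)
      (@Subsingleton.elim _ h _ _)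
    rw [@Subsingleton.elim _ h1 x 0, Abelian.Ext.comp_zero]

lemma extM_congr (C N M : ModuleCat.{u} R) (e : ↥N ≃ₗ[R] ↥M) (i : ℕ) :
    Subsingleton (ExtM R N C i) ↔ Subsingleton (ExtM R M C i) := by
  rw [← ModuleCat.isZero_iff_subsingleton, ← ModuleCat.isZero_iff_subsingleton]
  exact Iso.isZero_iff
    ((((Ext R (ModuleCat.{u} R) i).mapIso e.toModuleIso.op.symm).app C))

lemma extM_chain (C N : ModuleCat.{u} R) (k : ℕ) : ∀ M : ModuleCat.{u} R,
    ExtVanishingChain R C k N M → ∀ p : ℕ,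
    (Subsingleton (ExtM R N C (p+1)) ↔ Subsingleton (ExtM R M C (p+1+k))) := by
  induction k with
  | zero =>
    rintro M ⟨e⟩ p
    exact extM_congr R C N M e _
  | succ k ih =>
    rintro M ⟨X, K, f, g, hf, hg, hfg, -, hX, hc⟩ p
    rw [ih K hc p]
    have := extM_shift R C X K M f g hf hg hfg hX (p+k)
    rwa [show p+k+1 = p+1+k by omega, show p+k+2 = p+1+(k+1) by omega] at this

/-- given an exact sequence `0 → N → X_k → ⋯ → X_1 → M → 0` with
`Ext_R^i(X_j, C) = 0` for all `i > 0`, if `r.grade(M,C) > k` then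
`r.grade(N,C) = r.grade(M,C) - k` (stated additively in `ℕ∞`). -/
theorem statement10 [IsNoetherianRing R] (hsp : IsSemiperfectRing R)
    (C : ModuleCat.{u} R) (hC : IsSemidualizing R C)
    (k : ℕ) (hk : 0 < k)
    (N M : ModuleCat.{u} R) (hNfin : Module.Finite R ↥N)
    (hMfin : Module.Finite R ↥M)
    (hchain : ExtVanishingChain R C k N M)
    (hgr : (k : ℕ∞) < rgrade R C M) :
    rgrade R C N + (k : ℕ∞) = rgrade R C M := by
  have H := extM_chain R C N k M hchain
  have key : ∀ i : ℕ, 0 < i → (Subsingleton (ExtM R N C i) ↔ Subsingleton (ExtM R M C (i+k))) := by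
    intro i hi
    obtain ⟨p, rfl⟩ : ∃ p, i = p+1 := ⟨i-1, by omega⟩
    exact H p
  apply le_antisymm
  · refine le_sInf ?_
    rintro _ ⟨j, ⟨hj, hj'⟩, rfl⟩
    have hkj : k < j := by
      have : rgrade R C M ≤ (j : ℕ∞) := sInf_le ⟨j, ⟨hj, hj'⟩, rfl⟩
      exact_mod_cast hgr.trans_le this
    obtain ⟨i, rfl⟩ : ∃ i, j = i + k := ⟨j-k, by omega⟩
    have hN : rgrade R C N ≤ (i : ℕ∞) :=
      sInf_le ⟨i, ⟨by omega, fun h => hj' ((key i (by omega)).1 h)⟩, rfl⟩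
    push_cast
    gcongr
  · by_cases hne : {i | 0 < i ∧ ¬ Subsingleton (ExtM R N C i)}.Nonempty
    · have hmem := csInf_mem (hne.image (fun i : ℕ => (i : ℕ∞)))
      obtain ⟨i, ⟨hi, hi'⟩, he⟩ := hmem
      have he' : rgrade R C N = (i : ℕ∞) := he.symm
      rw [he']
      exact sInf_le ⟨i+k, ⟨by omega, fun h => hi' ((key i hi).2 h)⟩, by push_cast; rfl⟩
    · have : rgrade R C N = ⊤ := by
        unfold rgrade
        rw [Set.not_nonempty_iff_eq_empty.1 hne]; simp
      rw [this]; simp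

end
end

section
/- Let n be a positive integer and M a non-zero finite R-module with grade_R(M) ≥ n. Then T_n^C(M) = Tr_C(Ω^{n-1}M) is a reduced G_C-perfect R-module of G_C-dimension n. Moreover, in the case C = R, T_n^R(M) has projective dimension n. -/
open CategoryTheory TensorProduct

noncomputable section

universe u

variable (R : Type u) [CommRing R]

theorem extM_zero (M N : ModuleCat.{u} R) (h : Subsingleton (ExtM R M N 0)) (f : M ⟶ N) :
    f = 0 := by
  let P := projectiveResolution M
  have e := P.isoExt (R := R) 0 N
  have hz : Limits.IsZero ((P.complex.linearYonedaObj R N).homology 0) :=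
    Limits.IsZero.of_iso (ModuleCat.isZero_of_subsingleton (ExtM R M N 0)) e.symm
  rw [← HomologicalComplex.exactAt_iff_isZero_homology,
    HomologicalComplex.exactAt_iff' _ 0 0 1 (by simp) (by simp),
    ShortComplex.moduleCat_exact_iff] at hz
  let p : P.complex.X 0 ⟶ M := P.π.f 0
  have hp : Epi p := inferInstanceAs (Epi (P.π.f 0))
  have hdp : P.complex.d 1 0 ≫ p = 0 := P.complex_d_comp_π_f_zero
  obtain ⟨x, hx⟩ := hz (p ≫ f) (by
    change P.complex.d 1 0 ≫ p ≫ f = 0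
    rw [← Category.assoc, hdp, Limits.zero_comp])
  have h0 : p ≫ f = 0 := by
    refine hx.symm.trans ?_
    change P.complex.d 0 0 ≫ _ = 0
    rw [P.complex.shape 0 0 (by simp)]
    exact Limits.zero_comp
  rw [← cancel_epi p, h0, Limits.comp_zero]

theorem extM_iff_s11 (M N : ModuleCat.{u} R) (i : ℕ) (hi : 0 < i) :
    Subsingleton (ExtM R M N i) ↔ Subsingleton (Abelian.Ext M N i) := by
  obtain ⟨k, rfl⟩ : ∃ k, i = k + 1 := ⟨i - 1, by omega⟩
  let P := projectiveResolution M
  have e := P.isoExt (R := R) (k+1) N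
  have h1 : Subsingleton (ExtM R M N (k+1)) ↔
      Limits.IsZero ((P.complex.linearYonedaObj R N).homology (k+1)) := by
    constructor
    · intro h
      exact Limits.IsZero.of_iso (ModuleCat.isZero_of_subsingleton (ExtM R M N (k+1))) e.symm
    · intro h
      exact ModuleCat.subsingleton_of_isZero (Limits.IsZero.of_iso h e)
  rw [h1, ← HomologicalComplex.exactAt_iff_isZero_homology,
    HomologicalComplex.exactAt_iff' _ k (k+1) (k+2) (by simp) (by simp),
    ShortComplex.moduleCat_exact_iff]
  have h2 : Subsingleton (Abelian.Ext M N (k+1)) ↔ ∀ x : Abelian.Ext M N (k+1), x = 0 :=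
    ⟨fun h x => Subsingleton.elim _ _, fun h => ⟨fun a b => by rw [h a, h b]⟩⟩
  rw [h2]
  constructor
  · intro h x
    obtain ⟨f, hf, rfl⟩ := P.extMk_surjective x (k+2) rfl
    rw [P.extMk_eq_zero_iff f (k+2) rfl hf k rfl]
    exact h f hf
  · intro h (f : P.complex.X (k+1) ⟶ N) hf
    exact (P.extMk_eq_zero_iff f (k+2) rfl hf k rfl).1 (h _)

section ExtLemmas

variable {R}

/-- vanishing of the `i`-th Ext group of unbundled modules -/
def EZ (R : Type u) [CommRing R] (A N : Type u) [AddCommGroup A] [Module R A]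
    [AddCommGroup N] [Module R N] (i : ℕ) : Prop :=
  Subsingleton (Abelian.Ext (ModuleCat.of R A) (ModuleCat.of R N) i)

theorem ez_iff (A N : Type u) [AddCommGroup A] [Module R A]
    [AddCommGroup N] [Module R N] (i : ℕ) :
    EZ R A N i ↔ ∀ x : Abelian.Ext (ModuleCat.of R A) (ModuleCat.of R N) i, x = 0 :=
  ⟨fun h x => by unfold EZ at h; exact Subsingleton.elim _ _,
    fun h => ⟨fun a b => by rw [h a, h b]⟩⟩

variable {A B N X Y Z : Type u}
  [AddCommGroup A] [Module R A] [AddCommGroup B] [Module R B] [AddCommGroup N] [Module R N]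
  [AddCommGroup X] [Module R X] [AddCommGroup Y] [Module R Y] [AddCommGroup Z] [Module R Z]

theorem mk0_sum {V W : ModuleCat.{u} R} {ι : Type*} (s : Finset ι) (f : ι → (V ⟶ W)) :
    Abelian.Ext.mk₀ (∑ j ∈ s, f j) = ∑ j ∈ s, Abelian.Ext.mk₀ (f j) := by
  classical
  induction s using Finset.induction_on with
  | empty => simp
  | insert a s ha ih => rw [Finset.sum_insert ha, Finset.sum_insert ha, Abelian.Ext.mk₀_add, ih]

theorem sum_comp' {V W U : ModuleCat.{u} R} {ι : Type*} (s : Finset ι)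
    (f : ι → Abelian.Ext V W 0) {i : ℕ} (x : Abelian.Ext W U i) :
    (∑ j ∈ s, f j).comp x (zero_add i) = ∑ j ∈ s, (f j).comp x (zero_add i) := by
  classical
  induction s using Finset.induction_on with
  | empty => simp
  | insert a s ha ih => rw [Finset.sum_insert ha, Finset.sum_insert ha, Abelian.Ext.add_comp, ih]

theorem comp_sum' {V W U : ModuleCat.{u} R} {ι : Type*} (s : Finset ι)
    (f : ι → Abelian.Ext W U 0) {i : ℕ} (x : Abelian.Ext V W i) :
    x.comp (∑ j ∈ s, f j) (add_zero i) = ∑ j ∈ s, x.comp (f j) (add_zero i) := by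
  classical
  induction s using Finset.induction_on with
  | empty => simp
  | insert a s ha ih => rw [Finset.sum_insert ha, Finset.sum_insert ha, Abelian.Ext.comp_add, ih]

theorem ez_retract_left {ι : Type*} (s : Finset ι) (a : ι → (A →ₗ[R] Z)) (b : ι → (Z →ₗ[R] A))
    (h : ∀ x, ∑ j ∈ s, b j (a j x) = x) (i : ℕ) (hz : EZ R Z Y i) : EZ R A Y i := by
  rw [ez_iff] at hz ⊢
  intro x
  have hid : 𝟙 (ModuleCat.of R A) = ∑ j ∈ s, (ModuleCat.ofHom (a j) ≫ ModuleCat.ofHom (b j)) := by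
    ext x
    rw [ModuleCat.hom_sum]
    simp [h]
  rw [← Abelian.Ext.mk₀_id_comp x, hid, mk0_sum, sum_comp']
  refine Finset.sum_eq_zero fun j _ => ?_
  rw [← Abelian.Ext.mk₀_comp_mk₀_assoc, hz (Abelian.Ext.comp _ _ _), Abelian.Ext.comp_zero]

theorem ez_retract_right {ι : Type*} (s : Finset ι) (a : ι → (A →ₗ[R] Z)) (b : ι → (Z →ₗ[R] A))
    (h : ∀ x, ∑ j ∈ s, b j (a j x) = x) (i : ℕ) (hz : EZ R Y Z i) : EZ R Y A i := by
  rw [ez_iff] at hz ⊢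
  intro x
  have hid : 𝟙 (ModuleCat.of R A) = ∑ j ∈ s, (ModuleCat.ofHom (a j) ≫ ModuleCat.ofHom (b j)) := by
    ext x
    rw [ModuleCat.hom_sum]
    simp [h]
  rw [← Abelian.Ext.comp_mk₀_id x, hid, mk0_sum, comp_sum']
  refine Finset.sum_eq_zero fun j _ => ?_
  rw [← Abelian.Ext.mk₀_comp_mk₀, ← Abelian.Ext.comp_assoc_of_second_deg_zero, hz (Abelian.Ext.comp _ _ _),
    Abelian.Ext.zero_comp]

theorem ez_congr_left (e : A ≃ₗ[R] Z) (i : ℕ) (hz : EZ R Z Y i) : EZ R A Y i :=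
  ez_retract_left (ι := Unit) Finset.univ (fun _ => e.toLinearMap) (fun _ => e.symm.toLinearMap)
    (by simp) i hz

theorem ez_congr_right (e : A ≃ₗ[R] Z) (i : ℕ) (hz : EZ R Y Z i) : EZ R Y A i :=
  ez_retract_right (ι := Unit) Finset.univ (fun _ => e.toLinearMap) (fun _ => e.symm.toLinearMap)
    (by simp) i hz

theorem ez_proj [Module.Projective R A] (i : ℕ) (hi : 0 < i) : EZ R A Y i := by
  obtain ⟨k, rfl⟩ : ∃ k, i = k + 1 := ⟨i - 1, by omega⟩
  have : Projective (ModuleCat.of R A) := inferInstance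
  rw [ez_iff]
  intro x
  exact Abelian.Ext.eq_zero_of_projective x

/-- short exactness -/
def SE (f : A →ₗ[R] B) (g : B →ₗ[R] N) : Prop :=
  Function.Injective f ∧ Function.Surjective g ∧ LinearMap.ker g = LinearMap.range f

theorem SE.se {f : A →ₗ[R] B} {g : B →ₗ[R] N} (h : SE f g) :
    ∃ w, (ShortComplex.mk (ModuleCat.ofHom f) (ModuleCat.ofHom g) w).ShortExact := by
  obtain ⟨hf, hg, hk⟩ := h
  have w : ModuleCat.ofHom f ≫ ModuleCat.ofHom g = 0 := by
    ext x
    have : f x ∈ LinearMap.ker g := hk ▸ LinearMap.mem_range_self f x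
    simpa using this
  refine ⟨w, ?_⟩
  have : Mono (ModuleCat.ofHom f) := (ModuleCat.mono_iff_injective _).2 hf
  have : Epi (ModuleCat.ofHom g) := (ModuleCat.epi_iff_surjective _).2 hg
  refine ShortComplex.ShortExact.mk ?_
  rw [ShortComplex.moduleCat_exact_iff]
  intro x hx
  have : x ∈ LinearMap.range f := hk ▸ (LinearMap.mem_ker.2 hx)
  exact this

variable {f : A →ₗ[R] B} {g : B →ₗ[R] N}

theorem ez_contra1 (h : SE f g) (i : ℕ) (hi : EZ R N Y (i+1)) (hB : EZ R B Y i) :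
    EZ R A Y i := by
  obtain ⟨w, hS⟩ := h.se
  rw [ez_iff] at *
  intro x
  obtain ⟨y, rfl⟩ := Abelian.Ext.contravariant_sequence_exact₁ hS _ x (add_comm 1 i) (hi _)
  rw [hB y, Abelian.Ext.comp_zero]

theorem ez_contra3 (h : SE f g) (i : ℕ) (hi : EZ R A Y i) (hB : EZ R B Y (i+1)) :
    EZ R N Y (i+1) := by
  obtain ⟨w, hS⟩ := h.se
  rw [ez_iff] at *
  intro x
  obtain ⟨y, rfl⟩ := Abelian.Ext.contravariant_sequence_exact₃ hS _ x (hB _) (add_comm 1 i)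
  rw [hi y, Abelian.Ext.comp_zero]

theorem ez_shift (h : SE f g) (i : ℕ) (hi : 0 < i) (hB : ∀ i, 0 < i → EZ R B Y i) :
    EZ R N Y (i+1) ↔ EZ R A Y i :=
  ⟨fun hh => ez_contra1 h i hh (hB i hi), fun hh => ez_contra3 h i hh (hB _ (by omega))⟩

theorem ez_one (h : SE f g) (hB : EZ R B Y 1) :
    EZ R N Y 1 ↔ ∀ ψ : A →ₗ[R] Y, ∃ χ : B →ₗ[R] Y, χ ∘ₗ f = ψ := by
  obtain ⟨w, hS⟩ := h.se
  rw [ez_iff] at *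
  constructor
  · intro hN ψ
    obtain ⟨y, hy⟩ := Abelian.Ext.contravariant_sequence_exact₁ hS _
      (Abelian.Ext.mk₀ (ModuleCat.ofHom ψ)) (add_comm 1 0) (hN _)
    obtain ⟨y, rfl⟩ := (Abelian.Ext.mk₀_bijective _ _).2 y
    rw [Abelian.Ext.mk₀_comp_mk₀] at hy
    have := (Abelian.Ext.mk₀_bijective _ _).1 hy
    exact ⟨y.hom, congrArg ModuleCat.Hom.hom this⟩
  · intro hh x
    obtain ⟨y, rfl⟩ := Abelian.Ext.contravariant_sequence_exact₃ hS _ x (hB _) (add_comm 1 0)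
    obtain ⟨y, rfl⟩ := (Abelian.Ext.mk₀_bijective _ _).2 y
    obtain ⟨χ, hχ⟩ := hh y.hom
    have : y = ModuleCat.ofHom f ≫ ModuleCat.ofHom χ := by
      ext1
      exact hχ.symm
    rw [this, ← Abelian.Ext.mk₀_comp_mk₀]
    exact hS.extClass_comp_assoc _

theorem ez_cov (h : SE f g) (i : ℕ) (hB : EZ R X B i) (hA : EZ R X A (i+1)) : EZ R X N i := by
  obtain ⟨w, hS⟩ := h.se
  rw [ez_iff] at *
  intro x
  obtain ⟨y, rfl⟩ := Abelian.Ext.covariant_sequence_exact₃ _ hS x rfl (hA _)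
  rw [hB y, Abelian.Ext.zero_comp]

theorem ez_lift (h : SE f g) (hA : EZ R X A 1) (ψ : X →ₗ[R] N) :
    ∃ χ : X →ₗ[R] B, g ∘ₗ χ = ψ := by
  obtain ⟨w, hS⟩ := h.se
  rw [ez_iff] at *
  obtain ⟨y, hy⟩ := Abelian.Ext.covariant_sequence_exact₃ _ hS
    (Abelian.Ext.mk₀ (ModuleCat.ofHom ψ)) (zero_add 1) (hA _)
  obtain ⟨y, rfl⟩ := (Abelian.Ext.mk₀_bijective _ _).2 y
  rw [Abelian.Ext.mk₀_comp_mk₀] at hy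
  have := (Abelian.Ext.mk₀_bijective _ _).1 hy
  exact ⟨y.hom, congrArg ModuleCat.Hom.hom this⟩

end ExtLemmas

section SD

variable {R}
variable {C : Type u} [AddCommGroup C] [Module R C]

/-- semidualizing, unbundled -/
structure SD (R : Type u) [CommRing R] (C : Type u) [AddCommGroup C] [Module R C] : Prop where
  fin : Module.Finite R C
  bij : Function.Bijective (fun r : R => (r • LinearMap.id : C →ₗ[R] C))
  ez : ∀ i : ℕ, 0 < i → EZ R C C i

variable {P S S' : Type u} [AddCommGroup P] [Module R P] [AddCommGroup S] [Module R S]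
  [AddCommGroup S'] [Module R S']

theorem SD.inj (h : SD R C) {r : R} (hr : ∀ c : C, r • c = 0) : r = 0 := by
  apply h.bij.1
  ext c
  simp [hr c]

theorem SD.surj (h : SD R C) (f : C →ₗ[R] C) : ∃ r : R, ∀ c, f c = r • c := by
  obtain ⟨r, hr⟩ := h.bij.2 f
  exact ⟨r, fun c => by rw [← hr]; simp⟩

theorem dual_basis (R : Type u) [CommRing R] (P : Type u) [AddCommGroup P] [Module R P]
    [Module.Finite R P] [Module.Projective R P] :
    ∃ (m : ℕ) (φ : Fin m → (P →ₗ[R] R)) (e : Fin m → P), ∀ x, ∑ j, φ j x • e j = x := by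
  obtain ⟨m, f, g, hf, hg, hfg⟩ := Module.Finite.exists_comp_eq_id_of_projective R P
  refine ⟨m, fun j => LinearMap.proj j ∘ₗ g, fun j => f (Pi.single j 1), fun x => ?_⟩
  have h1 : f (g x) = x := LinearMap.congr_fun hfg x
  conv_rhs => rw [← h1, pi_eq_sum_univ' (g x), map_sum]
  simp

/-- `a_j` -/
def evalAt (C : Type u) [AddCommGroup C] [Module R C] (e : P) : (P →ₗ[R] C) →ₗ[R] C :=
  LinearMap.applyₗ e

theorem evalAt_apply (e : P) (f : P →ₗ[R] C) : evalAt C e f = f e := rfl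

/-- `b_j` -/
def coev (C : Type u) [AddCommGroup C] [Module R C] (φ : P →ₗ[R] R) : C →ₗ[R] (P →ₗ[R] C) :=
  LinearMap.smulRightₗ φ

theorem coev_apply (φ : P →ₗ[R] R) (c : C) (x : P) : coev C φ c x = φ x • c := rfl

theorem coev_sum {m : ℕ} {φ : Fin m → (P →ₗ[R] R)} {e : Fin m → P}
    (h : ∀ x, ∑ j, φ j x • e j = x) (f : P →ₗ[R] C) :
    ∑ j, coev C (φ j) (evalAt C (e j) f) = f := by
  ext x
  conv_rhs => rw [← h x, map_sum]
  simp [coev_apply, evalAt_apply]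

variable [Module.Finite R P] [Module.Projective R P]

variable (P) in
theorem SD.ez_dual_left (h : SD R C) (i : ℕ) (hi : 0 < i) : EZ R (P →ₗ[R] C) C i := by
  obtain ⟨m, φ, e, hx⟩ := dual_basis R P
  exact ez_retract_left Finset.univ (fun j => evalAt C (e j)) (fun j => coev C (φ j))
    (fun f => coev_sum hx f) i (h.ez i hi)

variable (P) in
theorem SD.ez_dual_right (h : SD R C) (i : ℕ) (hi : 0 < i) : EZ R C (P →ₗ[R] C) i := by
  obtain ⟨m, φ, e, hx⟩ := dual_basis R P
  exact ez_retract_right Finset.univ (fun j => evalAt C (e j)) (fun j => coev C (φ j))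
    (fun f => coev_sum hx f) i (h.ez i hi)

theorem SD.tors (h : SD R C) {x : P} (hx : ∀ f : P →ₗ[R] C, f x = 0) : x = 0 := by
  obtain ⟨m, φ, e, he⟩ := dual_basis R P
  rw [← he x]
  refine Finset.sum_eq_zero fun j _ => ?_
  rw [h.inj (r := φ j x) fun c => hx (coev C (φ j) c), zero_smul]

theorem SD.refl (h : SD R C) (ψ : (P →ₗ[R] C) →ₗ[R] C) : ∃ x : P, ∀ f, ψ f = f x := by
  obtain ⟨m, φ, e, he⟩ := dual_basis R P
  choose r hr using fun j => h.surj (ψ ∘ₗ coev C (φ j))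
  refine ⟨∑ j, r j • e j, fun f => ?_⟩
  conv_lhs => rw [← coev_sum he f, map_sum]
  rw [map_sum]
  refine Finset.sum_congr rfl fun j _ => ?_
  rw [map_smul]
  exact hr j _

/-- if `Hom(C,Q)=0` then `Q=0` -/
theorem SD.zero_of_hom [IsNoetherianRing R] (h : SD R C) {Q : Type u} [AddCommGroup Q] [Module R Q]
    [Module.Finite R Q] (hQ : ∀ f : C →ₗ[R] Q, f = 0) : Subsingleton Q := by
  have := h.fin
  have hs : Subsingleton (C →ₗ[R] Q) := ⟨fun a b => by rw [hQ a, hQ b]⟩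
  obtain ⟨r, hr, hreg⟩ := IsSMulRegular.subsingleton_linearMap_iff.1 hs
  have hr0 : r = 0 := h.inj fun c => Module.mem_annihilator.1 hr c
  subst hr0
  exact ⟨fun a b => hreg (by simp)⟩

/-- base of the grade argument -/
theorem SD.hom_zero [IsNoetherianRing R] (h : SD R C) [Module.Finite R S]
    (hS : ∀ f : S →ₗ[R] R, f = 0) : Subsingleton (S →ₗ[R] C) := by
  have := h.fin
  refine h.zero_of_hom fun g => ?_
  let H : R ≃ₗ[R] (C →ₗ[R] C) := LinearEquiv.ofBijective
    (LinearMap.toSpanSingleton R (C →ₗ[R] C) LinearMap.id) h.bij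
  have h0 := hS (H.symm.toLinearMap ∘ₗ g.flip)
  ext c s
  have h1 : g.flip s = 0 := by
    have := LinearMap.congr_fun h0 s
    simpa using this
  exact LinearMap.congr_fun h1 c

/-- step of the grade argument -/
theorem SD.range_top [IsNoetherianRing R] (h : SD R C) [Module.Finite R S']
    {ι : S' →ₗ[R] P}
    (h1 : ∀ f : S' →ₗ[R] R, ∃ f' : P →ₗ[R] R, f' ∘ₗ ι = f)
    (h2 : EZ R C (LinearMap.range (LinearMap.lcomp R C ι)) 1) :
    LinearMap.range (LinearMap.lcomp R C ι) = ⊤ := by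
  have := h.fin
  set I := LinearMap.range (LinearMap.lcomp R C ι) with hI
  suffices Subsingleton ((S' →ₗ[R] C) ⧸ I) from Submodule.Quotient.subsingleton_iff.1 this
  refine h.zero_of_hom fun g => ?_
  have hse2 : SE I.subtype I.mkQ := ⟨I.injective_subtype, I.mkQ_surjective, by simp⟩
  obtain ⟨χ, rfl⟩ := ez_lift hse2 h2 g
  let H : R ≃ₗ[R] (C →ₗ[R] C) := LinearEquiv.ofBijective
    (LinearMap.toSpanSingleton R (C →ₗ[R] C) LinearMap.id) h.bij
  obtain ⟨f', hf'⟩ := h1 (H.symm.toLinearMap ∘ₗ χ.flip)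
  ext c
  change I.mkQ (χ c) = 0
  rw [Submodule.mkQ_apply, Submodule.Quotient.mk_eq_zero, hI]
  refine ⟨coev C f' c, ?_⟩
  ext s
  have := LinearMap.congr_fun hf' s
  have h3 : H (f' (ι s)) = χ.flip s := by
    have h4 : f' (ι s) = H.symm (χ.flip s) := this
    rw [h4, LinearEquiv.apply_symm_apply]
  exact LinearMap.congr_fun h3 c

end SD

section Induct

variable {R}

/-- resolution dimension with respect to a class of modules -/
def dimLE (𝒳 : ModuleCat.{u} R → Prop) : ℕ → ModuleCat.{u} R → Prop
  | 0, M => 𝒳 M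
  | n+1, M => ∃ (X K : ModuleCat.{u} R) (f : ↥K →ₗ[R] ↥X) (g : ↥X →ₗ[R] ↥M),
      Function.Injective f ∧ Function.Surjective g ∧
      LinearMap.ker g = LinearMap.range f ∧
      𝒳 X ∧ dimLE 𝒳 n K

theorem gcdimLE_iff (C : ModuleCat.{u} R) (n : ℕ) (M : ModuleCat.{u} R) :
    gcdimLE R C n M ↔ dimLE (IsTotallyCReflexive R C) n M := by
  induction n generalizing M with
  | zero => exact Iff.rfl
  | succ n ih => simp only [gcdimLE, dimLE, ih]

theorem pdimLE_iff (n : ℕ) (M : ModuleCat.{u} R) :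
    pdimLE R n M ↔ dimLE (fun X => Module.Projective R X) n M := by
  induction n generalizing M with
  | zero => exact Iff.rfl
  | succ n ih => simp only [pdimLE, dimLE, ih]

variable {C : Type u} [AddCommGroup C] [Module R C]

theorem dimLE_ez {𝒳 : ModuleCat.{u} R → Prop}
    (h𝒳 : ∀ X, 𝒳 X → ∀ i, 0 < i → EZ R X C i) (n : ℕ) (M : ModuleCat.{u} R)
    (h : dimLE 𝒳 n M) (i : ℕ) (hi : n < i) : EZ R M C i := by
  induction n generalizing M i with
  | zero => exact h𝒳 M h i hi
  | succ n ih =>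
    obtain ⟨X, K, f, g, hf, hg, hk, hX, hK⟩ := h
    obtain ⟨i, rfl⟩ : ∃ l, i = l + 1 := ⟨i - 1, by omega⟩
    exact ez_contra3 (f := f) (g := g) ⟨hf, hg, hk⟩ i (ih K hK i (by omega)) (h𝒳 X hX _ (by omega))

variable {P S S' : Type u} [AddCommGroup P] [Module R P] [AddCommGroup S] [Module R S]
  [AddCommGroup S'] [Module R S']

/-- evaluation surjectivity / Ext vanishing -/
def EV (A : Submodule R (S →ₗ[R] C)) : ℕ → Prop
  | 0 => ∀ ψ : A →ₗ[R] C, ∃ s : S, ∀ f : A, ψ f = f.1 s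
  | i+1 => EZ R A C (i+1)

/-- pull back along `q` -/
def res (A : Submodule R (S →ₗ[R] C)) (q : P →ₗ[R] S) : A →ₗ[R] (P →ₗ[R] C) :=
  LinearMap.lcomp R C q ∘ₗ A.subtype

theorem res_apply (A : Submodule R (S →ₗ[R] C)) (q : P →ₗ[R] S) (f : A) (x : P) :
    res A q f x = f.1 (q x) := rfl

variable [Module.Finite R P] [Module.Projective R P]

theorem EV_iff (h : SD R C) (A : Submodule R (S →ₗ[R] C)) (q : P →ₗ[R] S)
    (hq : Function.Surjective q) {N : Type u} [AddCommGroup N] [Module R N]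
    (g : (P →ₗ[R] C) →ₗ[R] N) (hse : SE (res A q) g) (i : ℕ) :
    EZ R N C (i+1) ↔ EV A i := by
  cases i with
  | succ i => exact ez_shift hse (i+1) (by omega) (h.ez_dual_left P)
  | zero =>
    rw [zero_add, ez_one hse (h.ez_dual_left P 1 one_pos)]
    constructor
    · intro hh ψ
      obtain ⟨χ, rfl⟩ := hh ψ
      obtain ⟨x, hx⟩ := h.refl χ
      exact ⟨q x, fun f => hx _⟩
    · intro hh ψ
      obtain ⟨s, hs⟩ := hh ψ
      obtain ⟨x, rfl⟩ := hq s
      refine ⟨evalAt C x, ?_⟩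
      ext f
      exact (hs f).symm

/-- inductive package -/
structure Good (𝒳 : ModuleCat.{u} R → Prop) (k : ℕ) (A : Submodule R (S →ₗ[R] C)) : Prop where
  e : ∀ i, 0 < i → EZ R C A i
  d : ∀ (X N : ModuleCat.{u} R) (f : A →ₗ[R] X) (g : X →ₗ[R] N), SE f g → 𝒳 X → dimLE 𝒳 k N
  z : k = 0 → Nontrivial S ∧ A = ⊥
  s : ∀ j, k = j + 1 → (∀ s : S, (∀ f : S →ₗ[R] C, f s = 0) → s = 0) ∧
    (∀ i < j, EV A i) ∧ ¬ EV A j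

theorem ez_subsingleton_right {A X : Type u} [AddCommGroup A] [Module R A]
    [AddCommGroup X] [Module R X] [Subsingleton A] (i : ℕ) : EZ R X A i :=
  ez_retract_right (R := R) (Z := A) (ι := Unit) ∅ (fun _ => 0) (fun _ => 0)
    (fun x => Subsingleton.elim _ _) i (by
      rw [ez_iff]
      intro x
      have h0 : 𝟙 (ModuleCat.of R A) = 0 := by
        ext x
        exact Subsingleton.elim (α := A) _ _
      rw [← Abelian.Ext.comp_mk₀_id x, h0, Abelian.Ext.mk₀_zero, Abelian.Ext.comp_zero])

theorem Good.base {𝒳 : ModuleCat.{u} R → Prop}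
    (hiso : ∀ X N : ModuleCat.{u} R, 𝒳 X → (X ≃ₗ[R] N) → 𝒳 N)
    [Nontrivial S] (hS : Subsingleton (S →ₗ[R] C)) :
    Good 𝒳 0 (⊤ : Submodule R (S →ₗ[R] C)) where
  e i _ := ez_subsingleton_right i
  d X N f g hse hX := by
    obtain ⟨hf, hg, hk⟩ := hse
    refine hiso X N hX (LinearEquiv.ofBijective g ⟨?_, hg⟩)
    rw [← LinearMap.ker_eq_bot, hk, LinearMap.range_eq_bot]
    ext x
    rw [Subsingleton.elim x 0, map_zero, map_zero]
  z _ := ⟨inferInstance, Subsingleton.elim _ _⟩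
  s j hj := by omega

theorem Good.step {𝒳 : ModuleCat.{u} R → Prop} (h : SD R C)
    (hD : 𝒳 (ModuleCat.of R (P →ₗ[R] C))) {k : ℕ}
    (hG : Good 𝒳 k (⊤ : Submodule R (S →ₗ[R] C)))
    {ι : S' →ₗ[R] P} {π : P →ₗ[R] S} (hse : SE ι π) :
    Good 𝒳 (k+1) (LinearMap.range (LinearMap.lcomp R C ι)) := by
  obtain ⟨hι, hπ, hk⟩ := hse
  have hπι : ∀ x, π (ι x) = 0 := fun x => by
    have : ι x ∈ LinearMap.ker π := hk ▸ LinearMap.mem_range_self ι x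
    exact this
  have hse2 : SE (res ⊤ π) (LinearMap.lcomp R C ι).rangeRestrict := by
    refine ⟨?_, LinearMap.surjective_rangeRestrict _, ?_⟩
    · intro f f' hff
      ext s
      obtain ⟨x, rfl⟩ := hπ s
      exact LinearMap.congr_fun hff x
    · rw [LinearMap.ker_rangeRestrict]
      ext f
      constructor
      · intro hf
        have hf0 : ∀ x, f (ι x) = 0 := fun x => LinearMap.congr_fun (LinearMap.mem_ker.1 hf) x
        have hle : LinearMap.ker π ≤ LinearMap.ker f := by
          rw [hk]
          rintro _ ⟨x, rfl⟩
          exact hf0 x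
        refine ⟨⟨(LinearMap.ker π).liftQ f hle ∘ₗ
          (π.quotKerEquivOfSurjective hπ).symm.toLinearMap, trivial⟩, ?_⟩
        ext x
        rw [res_apply]
        have : (π.quotKerEquivOfSurjective hπ).symm (π x) = (LinearMap.ker π).mkQ x := by
          rw [LinearEquiv.symm_apply_eq]
          rfl
        simp only [LinearMap.comp_apply, LinearEquiv.coe_coe]
        rw [this]
        rfl
      · rintro ⟨f, rfl⟩
        rw [LinearMap.mem_ker]
        ext x
        change f.1 (π (ι x)) = 0
        rw [hπι, map_zero]
  refine ⟨?_, ?_, by simp, ?_⟩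
  · intro i hi
    exact ez_cov hse2 i (h.ez_dual_right P i hi) (hG.e (i+1) (by omega))
  · intro X N f g hfg hX
    exact ⟨X, ModuleCat.of R _, f, g, hfg.1, hfg.2.1, hfg.2.2, hX,
      hG.d (ModuleCat.of R _) (ModuleCat.of R _) _ _ hse2 hD⟩
  · intro j hj
    obtain rfl : k = j := by omega
    refine ⟨?_, ?_⟩
    · intro s hs
      apply hι
      rw [map_zero]
      exact h.tors fun f => hs (f ∘ₗ ι)
    cases k with
    | zero =>
      refine ⟨by simp, fun hev => ?_⟩
      obtain ⟨hnt, hbot⟩ := hG.z rfl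
      obtain ⟨m, hm⟩ := exists_ne (0 : S)
      obtain ⟨p, rfl⟩ := hπ m
      have hinj : Function.Injective (LinearMap.lcomp R C ι) := by
        rw [← LinearMap.ker_eq_bot, ← LinearMap.ker_rangeRestrict, hse2.2.2, eq_bot_iff]
        rintro _ ⟨f, rfl⟩
        have : f = 0 := by
          ext1
          exact hbot.le f.2
        rw [this, map_zero]
        exact Submodule.zero_mem _
      let E := LinearEquiv.ofInjective (LinearMap.lcomp R C ι) hinj
      obtain ⟨s, hs⟩ := hev (evalAt C p ∘ₗ E.symm.toLinearMap)
      have hps : p - ι s = 0 := h.tors fun f => by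
        have h1 := hs (E f)
        have h2 : E.symm (E f) = f := E.symm_apply_apply f
        simp only [LinearMap.comp_apply, LinearEquiv.coe_coe] at h1
        rw [h2] at h1
        rw [map_sub, sub_eq_zero]
        exact h1
      rw [sub_eq_zero.1 hps] at hm
      exact hm (hπι s)
    | succ k =>
      obtain ⟨ht, h1, h2⟩ := hG.s k rfl
      have hs := EV_iff h ⊤ π hπ _ hse2
      refine ⟨?_, fun hc => h2 ((hs k).1 hc)⟩
      intro i hi
      cases i with
      | zero =>
        intro ψ
        obtain ⟨x, hx⟩ := h.refl (ψ ∘ₗ (LinearMap.lcomp R C ι).rangeRestrict)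
        have hx0 : π x = 0 := ht _ fun f => by
          rw [← LinearMap.comp_apply, ← hx]
          have : (LinearMap.lcomp R C ι).rangeRestrict (f ∘ₗ π) = 0 := by
            ext y
            change f (π (ι y)) = 0
            rw [hπι, map_zero]
          rw [LinearMap.comp_apply, this, map_zero]
        obtain ⟨s, rfl⟩ : x ∈ LinearMap.range ι := hk ▸ LinearMap.mem_ker.2 hx0
        refine ⟨s, ?_⟩
        rintro ⟨_, f, rfl⟩
        exact hx f
      | succ i => exact (hs i).2 (h1 i (by omega))

end Induct

section Final

variable {R}
variable {C : Type u} [AddCommGroup C] [Module R C]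

theorem chain [IsNoetherianRing R] (h : SD R C) {𝒳 : ModuleCat.{u} R → Prop}
    (hiso : ∀ X N : ModuleCat.{u} R, 𝒳 X → (X ≃ₗ[R] N) → 𝒳 N)
    (hD : ∀ P : ModuleCat.{u} R, Module.Finite R P → Module.Projective R P →
      𝒳 (ModuleCat.of R (P →ₗ[R] C)))
    (M : ModuleCat.{u} R) (hMfin : Module.Finite R M) (hM0 : Nontrivial M)
    (hhom : ∀ f : M →ₗ[R] R, f = 0) (k : ℕ) (S : ModuleCat.{u} R)
    (hS : IsNthSyzygy R k M S) (hext : ∀ i, 0 < i → i ≤ k → EZ R M R i) :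
    Good 𝒳 k (⊤ : Submodule R (S →ₗ[R] C)) ∧ Module.Finite R S ∧
      ∀ i, 0 < i → EZ R M R (i + k) → EZ R S R i := by
  induction k generalizing S with
  | zero =>
    obtain ⟨e⟩ := hS
    have hf : Module.Finite R S := Module.Finite.equiv e.symm
    have hn : Nontrivial S := e.toEquiv.nontrivial
    refine ⟨Good.base hiso (h.hom_zero fun f => ?_), hf, fun i _ hh => ez_congr_left e i hh⟩
    have := hhom (f ∘ₗ e.symm.toLinearMap)
    ext s
    simpa using LinearMap.congr_fun this (e s)
  | succ k ih =>
    obtain ⟨K, hK, P, π, hPfin, ⟨hPproj, hπ, -⟩, ⟨e⟩⟩ := hS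
    obtain ⟨hG, hKfin, hsh⟩ := ih K hK fun i h1 h2 => hext i h1 (by omega)
    have hfin : Module.Finite R S := Module.Finite.equiv e.symm
    have hse : SE ((LinearMap.ker π).subtype ∘ₗ e.toLinearMap) π := by
      refine ⟨(Submodule.injective_subtype _).comp e.injective, hπ, ?_⟩
      rw [LinearMap.range_comp, LinearEquiv.range, Submodule.map_top, Submodule.range_subtype]
    have hG' := hG.step h (hD P hPfin hPproj) hse
    have hPz : ∀ i, 0 < i → EZ R P R i := fun i hi => ez_proj i hi
    have htop := h.range_top (ι := (LinearMap.ker π).subtype ∘ₗ e.toLinearMap)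
      ((ez_one hse (hPz 1 one_pos)).1 (hsh 1 one_pos
        (by rw [add_comm]; exact hext (k+1) (by omega) le_rfl))) (hG'.e 1 one_pos)
    rw [htop] at hG'
    refine ⟨hG', hfin, fun i hi hh => ?_⟩
    rw [← ez_shift hse i hi hPz]
    apply hsh _ (by omega)
    rwa [show i + 1 + k = i + (k + 1) by omega]

theorem main_gen [IsNoetherianRing R] (h : SD R C) {𝒳 : ModuleCat.{u} R → Prop}
    (hiso : ∀ X N : ModuleCat.{u} R, 𝒳 X → (X ≃ₗ[R] N) → 𝒳 N)
    (hD : ∀ P : ModuleCat.{u} R, Module.Finite R P → Module.Projective R P →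
      𝒳 (ModuleCat.of R (P →ₗ[R] C)))
    (M : ModuleCat.{u} R) (hMfin : Module.Finite R M) (hM0 : Nontrivial M)
    (hhom : ∀ f : M →ₗ[R] R, f = 0) (n : ℕ) (S T : ModuleCat.{u} R)
    (hS : IsNthSyzygy R n M S) (hext : ∀ i, 0 < i → i ≤ n → EZ R M R i)
    (hT : IsTransposeC R (ModuleCat.of R C) S T) :
    dimLE 𝒳 (n+1) T ∧ (∀ i, 0 < i → i < n + 1 → EZ R T C i) ∧ ¬ EZ R T C (n+1) := by
  obtain ⟨hG, hfin, -⟩ := chain h hiso hD M hMfin hM0 hhom n S hS hext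
  obtain ⟨P1, P0, d, π, ⟨hf1, hf0, ⟨hp0, hπ, -⟩, hdk, hp1, -⟩, ⟨e⟩⟩ := hT
  change T ≃ₗ[R] ((P1 →ₗ[R] C) ⧸ LinearMap.range (LinearMap.lcomp R C d)) at e
  have hse : SE (LinearMap.ker π).subtype π := by
    refine ⟨Submodule.injective_subtype _, hπ, ?_⟩
    rw [Submodule.range_subtype]
  have hG' := hG.step h (hD P0 hf0 hp0) hse
  let q : P1 →ₗ[R] LinearMap.ker π :=
    d.codRestrict _ fun x => hdk ▸ LinearMap.mem_range_self d x
  have hq : Function.Surjective q := by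
    rintro ⟨x, hx⟩
    rw [← hdk] at hx
    obtain ⟨y, rfl⟩ := hx
    exact ⟨y, rfl⟩
  have hse2 : SE (res (LinearMap.range (LinearMap.lcomp R C (LinearMap.ker π).subtype)) q)
      (e.symm.toLinearMap ∘ₗ (LinearMap.range (LinearMap.lcomp R C d)).mkQ) := by
    refine ⟨?_, e.symm.surjective.comp (Submodule.mkQ_surjective _), ?_⟩
    · intro f f' hff
      ext s
      obtain ⟨x, rfl⟩ := hq s
      exact LinearMap.congr_fun hff x
    · rw [LinearEquiv.ker_comp, Submodule.ker_mkQ]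
      ext f
      constructor
      · rintro ⟨g, rfl⟩
        exact ⟨⟨_, g, rfl⟩, rfl⟩
      · rintro ⟨⟨_, g, rfl⟩, rfl⟩
        exact ⟨g, rfl⟩
  obtain ⟨-, h1, h2⟩ := hG'.s n rfl
  have hs := EV_iff h _ q hq _ hse2
  refine ⟨hG'.d (ModuleCat.of R _) T _ _ hse2 (hD P1 hf1 hp1), fun i hi hi2 => ?_,
    fun hc => h2 ((hs n).1 hc)⟩
  obtain ⟨i, rfl⟩ : ∃ l, i = l + 1 := ⟨i - 1, by omega⟩
  exact (hs i).2 (h1 i (by omega))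

theorem sInf_eq_of (s : Set ℕ) (n : ℕ) (hn : n ∈ s) (h : ∀ m ∈ s, n ≤ m) :
    sInf ((fun i : ℕ => (i : ℕ∞)) '' s) = n := by
  apply le_antisymm
  · exact sInf_le ⟨n, hn, rfl⟩
  · refine le_sInf ?_
    rintro _ ⟨m, hm, rfl⟩
    exact Nat.cast_le.2 (h m hm)

theorem extM_iff' (M N : ModuleCat.{u} R) (i : ℕ) (hi : 0 < i) :
    Subsingleton (ExtM R M N i) ↔ EZ R M N i := extM_iff_s11 R M N i hi

theorem tcr_iso (C X N : ModuleCat.{u} R) (hX : IsTotallyCReflexive R C X) (e : X ≃ₗ[R] N) :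
    IsTotallyCReflexive R C N := by
  obtain ⟨hf, ⟨hi, hs⟩, h1, h2⟩ := hX
  refine ⟨Module.Finite.equiv e, ⟨?_, ?_⟩, fun i hi => ?_, fun i hi => ?_⟩
  · rw [← LinearMap.ker_eq_bot, eq_bot_iff]
    intro n hn
    have hn0 : ∀ f : N →ₗ[R] C, f n = 0 := fun f => LinearMap.congr_fun (LinearMap.mem_ker.1 hn) f
    have : e.symm n = 0 := by
      apply hi
      rw [map_zero]
      ext g
      exact hn0 (g ∘ₗ e.symm.toLinearMap)
    simpa using this
  · intro Ψ
    obtain ⟨x, hx⟩ := hs (Ψ ∘ₗ LinearMap.lcomp R C e.symm.toLinearMap)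
    refine ⟨e x, ?_⟩
    ext f
    have h3 := LinearMap.congr_fun hx (f ∘ₗ e.toLinearMap)
    have h4 : LinearMap.lcomp R C e.symm.toLinearMap (f ∘ₗ e.toLinearMap) = f := by
      ext y
      change f (e (e.symm y)) = f y
      rw [e.apply_symm_apply]
    rw [LinearMap.comp_apply, h4] at h3
    exact h3
  · rw [extM_iff' _ _ _ hi]
    exact ez_congr_left e.symm i ((extM_iff' _ _ _ hi).1 (h1 i hi))
  · rw [extM_iff' _ _ _ hi]
    exact ez_congr_left (e.symm.arrowCongr (LinearEquiv.refl R C)) i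
      ((extM_iff' _ _ _ hi).1 (h2 i hi))

theorem tcr_dual [IsNoetherianRing R] (C P : ModuleCat.{u} R) (h : SD R C)
    (hf : Module.Finite R P) (hp : Module.Projective R P) :
    IsTotallyCReflexive R C (ModuleCat.of R (P →ₗ[R] C)) := by
  have := h.fin
  refine ⟨inferInstanceAs (Module.Finite R (P →ₗ[R] C)), ⟨?_, ?_⟩, fun i hi => ?_, fun i hi => ?_⟩
  · rw [← LinearMap.ker_eq_bot, eq_bot_iff]
    intro (f : P →ₗ[R] C) hn
    rw [Submodule.mem_bot]
    refine LinearMap.ext fun x => ?_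
    exact LinearMap.congr_fun (LinearMap.mem_ker.1 hn) (evalAt (C : Type u) x)
  · intro (Ψ : ((P →ₗ[R] C) →ₗ[R] C) →ₗ[R] C)
    let v : P →ₗ[R] ((P →ₗ[R] C) →ₗ[R] C) := LinearMap.applyₗ
    refine ⟨Ψ ∘ₗ v, ?_⟩
    refine LinearMap.ext fun (ψ : (P →ₗ[R] C) →ₗ[R] C) => ?_
    obtain ⟨x, hx⟩ := h.refl ψ
    change ψ (Ψ ∘ₗ v) = Ψ ψ
    rw [hx]
    change Ψ (v x) = Ψ ψ
    congr 1
    ext f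
    exact (hx f).symm
  · rw [extM_iff' _ _ _ hi]
    exact h.ez_dual_left P i hi
  · rw [extM_iff' _ _ _ hi]
    let v : P →ₗ[R] ((P →ₗ[R] C) →ₗ[R] C) := LinearMap.applyₗ
    have hv : Function.Bijective v := by
      constructor
      · rw [← LinearMap.ker_eq_bot, eq_bot_iff]
        intro x hx
        exact h.tors fun f => LinearMap.congr_fun (LinearMap.mem_ker.1 hx) f
      · intro ψ
        obtain ⟨x, hx⟩ := h.refl ψ
        exact ⟨x, LinearMap.ext fun f => (hx f).symm⟩
    exact ez_congr_left (LinearEquiv.ofBijective v hv).symm i (ez_proj i hi)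

theorem proj_dual (P : ModuleCat.{u} R)
    (hf : Module.Finite R P) (hp : Module.Projective R P) :
    Module.Projective R (ModuleCat.of R (P →ₗ[R] R)) :=
  inferInstanceAs (Module.Projective R (Module.Dual R P))

theorem sd_self : SD R R where
  fin := inferInstance
  bij := by
    constructor
    · intro r s h
      simpa using LinearMap.congr_fun h (1 : R)
    · intro f
      refine ⟨f 1, ?_⟩
      ext
      simp
  ez i hi := ez_proj i hi

end Final

/-- if `grade_R(M) ≥ n > 0` and `M ≠ 0` is finite, then
`T_n^C(M) = Tr_C(Ω^{n-1} M)` is reduced `G_C`-perfect of `G_C`-dimension `n`;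
for `C = R` it has projective dimension `n`. -/
theorem statement11 [IsNoetherianRing R] (hsp : IsSemiperfectRing R)
    (C : ModuleCat.{u} R) (hC : IsSemidualizing R C)
    (n : ℕ) (hn : 0 < n)
    (M : ModuleCat.{u} R) (hMfin : Module.Finite R ↥M) (hM0 : Nontrivial ↥M)
    (hgrade : (n : ℕ∞) ≤ gradeR R M) :
    (∀ S T : ModuleCat.{u} R, IsNthSyzygy R (n - 1) M S →
      IsTransposeC R C S T →
        IsReducedGCPerfect R C T ∧ gcdim R C T = n) ∧
    (∀ S T : ModuleCat.{u} R, IsNthSyzygy R (n - 1) M S →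
      IsTransposeC R (ModuleCat.of R R) S T → pdim R T = n) := by
  obtain ⟨k, rfl⟩ : ∃ k, n = k + 1 := ⟨n - 1, by omega⟩
  have hsub : ∀ i, i < k + 1 → Subsingleton (ExtM R M (ModuleCat.of R R) i) := by
    intro i hi
    by_contra hc
    have h1 : gradeR R M ≤ (i : ℕ∞) := sInf_le ⟨i, hc, rfl⟩
    have h2 := hgrade.trans h1
    have h3 : k + 1 ≤ i := by exact_mod_cast h2
    omega
  have hhom : ∀ f : M →ₗ[R] R, f = 0 := fun f => by
    have := extM_zero R M (ModuleCat.of R R) (hsub 0 (by omega)) (ModuleCat.ofHom f)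
    exact congrArg ModuleCat.Hom.hom this
  have hext : ∀ i, 0 < i → i ≤ k → EZ R M R i := fun i hi hk =>
    (extM_iff' _ _ _ hi).1 (hsub i (by omega))
  rw [Nat.add_sub_cancel]
  have hSD : SD R C := ⟨hC.1, hC.2.1, fun i hi => (extM_iff' _ _ _ hi).1 (hC.2.2 i hi)⟩
  constructor
  · intro S T hS hT
    obtain ⟨h1, h2, h3⟩ := main_gen (C := C) hSD (𝒳 := IsTotallyCReflexive R C)
      (fun X N hX e => tcr_iso C X N hX e) (fun P hf hp => tcr_dual C P hSD hf hp)
      M hMfin hM0 hhom k S T hS hext hT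
    have hg : gcdim R C T = ((k + 1 : ℕ) : ℕ∞) := by
      refine sInf_eq_of _ _ ((gcdimLE_iff C _ _).2 h1) fun m hm => ?_
      by_contra hc
      exact h3 (dimLE_ez (fun X hX i hi => (extM_iff' X C i hi).1 (hX.2.2.1 i hi)) m T
        ((gcdimLE_iff C _ _).1 hm) (k+1) (by omega))
    have hr : rgrade R C T = ((k + 1 : ℕ) : ℕ∞) := by
      refine sInf_eq_of _ _ ⟨hn, fun hc => h3 ((extM_iff' _ _ _ hn).1 hc)⟩ ?_
      rintro m ⟨hm, hm2⟩
      by_contra hc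
      exact hm2 ((extM_iff' _ _ _ hm).2 (h2 m hm (by omega)))
    refine ⟨⟨?_, hr.trans hg.symm⟩, hg⟩
    rw [hg]
    exact ENat.natCast_ne_top _
  · intro S T hS hT
    obtain ⟨h1, h2, h3⟩ := main_gen (C := R) sd_self (𝒳 := fun X => Module.Projective R X)
      (fun X N hX e => by haveI : Module.Projective R X := hX; exact Module.Projective.of_equiv e) (fun P hf hp => proj_dual P hf hp)
      M hMfin hM0 hhom k S T hS hext hT
    refine sInf_eq_of _ _ ((pdimLE_iff _ _).2 h1) fun m hm => ?_
    by_contra hc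
    exact h3 (dimLE_ez (C := R) (𝒳 := fun X => Module.Projective R X)
      (fun X hX i hi => by haveI : Module.Projective R X := hX; exact ez_proj i hi) m T
      ((pdimLE_iff _ _).1 hm) (k+1) (by omega))

end
end
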